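/- Lemma 2.4(i): Let v be a classical solution of v_t = v_rr + ((m−1)/r) v_r − (b(r,t)/r²) v on [0,R] × (t1,t2), not identically zero, satisfying the boundary condition (1.5). Then for any t0 ∈ (t1,t2) there exists ε0 > 0 such that Z(v(·,t)) < ∞ for every t ∈ (t0 − ε0, t0). -/

import Mathlib

open Set Filter


namespace ZN

structure Good (R a c : ℝ) (h : ℝ → ℝ → ℝ) : Prop where
  cont : ∀ t ∈ Ioo a c, ContinuousOn (fun r => h r t) (Ioc 0 R)
  bdd : ∃ B : ℝ, ∀ r ∈ Ioc 0 R, ∀ t ∈ Ioo a c, |h r t| ≤ B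

variable {R a c : ℝ} {h h1 h2 : ℝ → ℝ → ℝ}

theorem Good.add (g1 : Good R a c h1) (g2 : Good R a c h2) :
    Good R a c (fun r t => h1 r t + h2 r t) := by
  refine ⟨fun t ht => (g1.cont t ht).add (g2.cont t ht), ?_⟩
  obtain ⟨B1, hB1⟩ := g1.bdd
  obtain ⟨B2, hB2⟩ := g2.bdd
  exact ⟨B1 + B2, fun r hr t ht => (abs_add_le _ _).trans (add_le_add (hB1 r hr t ht) (hB2 r hr t ht))⟩

theorem Good.mul (g1 : Good R a c h1) (g2 : Good R a c h2) :
    Good R a c (fun r t => h1 r t * h2 r t) := by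
  refine ⟨fun t ht => (g1.cont t ht).mul (g2.cont t ht), ?_⟩
  obtain ⟨B1, hB1⟩ := g1.bdd
  obtain ⟨B2, hB2⟩ := g2.bdd
  refine ⟨B1 * B2, fun r hr t ht => ?_⟩
  rw [abs_mul]
  exact mul_le_mul (hB1 r hr t ht) (hB2 r hr t ht) (abs_nonneg _)
    ((abs_nonneg _).trans (hB1 r hr t ht))

theorem Good.const (x : ℝ) : Good R a c (fun _ _ => x) :=
  ⟨fun _ _ => continuousOn_const, ⟨|x|, fun _ _ _ _ => le_rfl⟩⟩

theorem Good.neg (g1 : Good R a c h1) : Good R a c (fun r t => - h1 r t) := by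
  simpa using (Good.const (-1)).mul g1

theorem Good.sub (g1 : Good R a c h1) (g2 : Good R a c h2) :
    Good R a c (fun r t => h1 r t - h2 r t) := by
  simpa [sub_eq_add_neg] using g1.add g2.neg

theorem Good.pow (g1 : Good R a c h1) (n : ℕ) : Good R a c (fun r t => h1 r t ^ n) := by
  induction n with
  | zero => simpa using Good.const 1
  | succ n ih => simpa [pow_succ] using ih.mul g1

theorem Good.congr (g1 : Good R a c h1) (e : ∀ r ∈ Ioc 0 R, ∀ t ∈ Ioo a c, h2 r t = h1 r t) :
    Good R a c h2 := by
  refine ⟨fun t ht => (g1.cont t ht).congr fun r hr => e r hr t ht, ?_⟩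
  obtain ⟨B1, hB1⟩ := g1.bdd
  exact ⟨B1, fun r hr t ht => by rw [e r hr t ht]; exact hB1 r hr t ht⟩

theorem Good.id (hR : 0 < R) : Good R a c (fun r _ => r) :=
  ⟨fun _ _ => continuousOn_id, ⟨R, fun r hr _ _ => by rw [abs_of_pos hr.1]; exact hr.2⟩⟩

theorem Good.inv_tau {T : ℝ} (hT : c < T) : Good R a c (fun _ t => 1 / (T - t)) := by
  refine ⟨fun _ _ => continuousOn_const, ⟨1 / (T - c), fun r _ t ht => ?_⟩⟩
  have : 0 < T - t := by linarith [ht.2]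
  rw [abs_of_pos (by positivity)]
  exact one_div_le_one_div_of_le (by linarith) (by linarith [ht.2])

noncomputable def gs (ρ T r t : ℝ) : ℝ := Real.exp (-(r - ρ) ^ 2 / (4 * (T - t)))

theorem gs_pos (ρ T r t : ℝ) : 0 < gs ρ T r t := Real.exp_pos _

theorem gs_le_one (ρ T r t : ℝ) (h : t < T) : gs ρ T r t ≤ 1 := by
  unfold gs
  rw [Real.exp_le_one_iff]
  apply div_nonpos_of_nonpos_of_nonneg
  · nlinarith [sq_nonneg (r - ρ)]
  · linarith

theorem Good.gs {ρ T : ℝ} (hT : c < T) : Good R a c (gs ρ T) := by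
  refine ⟨fun _ _ => by unfold ZN.gs; fun_prop, ⟨1, fun r _ t ht => ?_⟩⟩
  rw [abs_of_pos (gs_pos _ _ _ _)]
  exact gs_le_one _ _ _ _ (by linarith [ht.2])

theorem gs_hasDerivAt_t (ρ T r t : ℝ) (h : t < T) :
    HasDerivAt (fun s => gs ρ T r s) (gs ρ T r t * (-(r - ρ) ^ 2 / (4 * (T - t) ^ 2))) t := by
  have h0 : T - t ≠ 0 := by linarith [h] |> fun (h : 0 < T - t) => h.ne'
  have h1 : HasDerivAt (fun s : ℝ => 4 * (T - s)) (4 * (0 - 1)) t :=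
    ((hasDerivAt_const t T).sub (hasDerivAt_id t)).const_mul 4
  have h2 := ((hasDerivAt_const t (-(r - ρ) ^ 2)).div h1 (by simpa using h0)).exp
  refine h2.congr_deriv ?_
  simp only [Pi.div_apply]
  unfold gs
  field_simp
  ring

theorem gs_hasDerivAt_r (ρ T r t : ℝ) :
    HasDerivAt (fun s => gs ρ T s t) (gs ρ T r t * (-((r - ρ) / (2 * (T - t))))) r := by
  have h1 : HasDerivAt (fun s : ℝ => -(s - ρ) ^ 2) (-(2 * (r - ρ))) r := by
    have := (((hasDerivAt_id r).sub_const ρ).pow 2).neg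
    refine this.congr_deriv ?_
    simp
  have h2 := (h1.div_const (4 * (T - t))).exp
  refine h2.congr_deriv ?_
  unfold gs
  rcases eq_or_ne (T - t) 0 with h0 | h0
  · simp [h0]
  · field_simp
    ring

noncomputable def I (R : ℝ) (h : ℝ → ℝ → ℝ) (t : ℝ) : ℝ := ∫ r in (0:ℝ)..R, h r t

theorem Good.int (hR : 0 < R) (g : Good R a c h) {t : ℝ} (ht : t ∈ Ioo a c) :
    IntervalIntegrable (fun r => h r t) MeasureTheory.volume 0 R := by
  obtain ⟨B, hB⟩ := g.bdd
  rw [intervalIntegrable_iff_integrableOn_Ioc_of_le hR.le]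
  refine MeasureTheory.IntegrableOn.of_bound (by simp)
    ((g.cont t ht).aestronglyMeasurable measurableSet_Ioc) B ?_
  exact (MeasureTheory.ae_restrict_iff' measurableSet_Ioc).2 (MeasureTheory.ae_of_all _ fun r hr => hB r hr t ht)

theorem I_add (hR : 0 < R) (g1 : Good R a c h1) (g2 : Good R a c h2) {t : ℝ} (ht : t ∈ Ioo a c) :
    I R (fun r t => h1 r t + h2 r t) t = I R h1 t + I R h2 t :=
  intervalIntegral.integral_add (g1.int hR ht) (g2.int hR ht)

theorem I_sub (hR : 0 < R) (g1 : Good R a c h1) (g2 : Good R a c h2) {t : ℝ} (ht : t ∈ Ioo a c) :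
    I R (fun r t => h1 r t - h2 r t) t = I R h1 t - I R h2 t :=
  intervalIntegral.integral_sub (g1.int hR ht) (g2.int hR ht)

theorem I_smul (x : ℝ → ℝ) (t : ℝ) :
    I R (fun r t => x t * h r t) t = x t * I R h t :=
  intervalIntegral.integral_const_mul _ _

theorem I_congr (hR : 0 < R) {t : ℝ} (e : ∀ r ∈ Ioc 0 R, h1 r t = h2 r t) : I R h1 t = I R h2 t := by
  unfold I
  apply intervalIntegral.integral_congr_ae
  rw [uIoc_of_le hR.le]
  exact MeasureTheory.ae_of_all _ e

theorem I_mono (hR : 0 < R) (g1 : Good R a c h1) (g2 : Good R a c h2) {t : ℝ} (ht : t ∈ Ioo a c)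
    (e : ∀ r ∈ Ioc 0 R, h1 r t ≤ h2 r t) : I R h1 t ≤ I R h2 t := by
  unfold I
  rw [intervalIntegral.integral_of_le hR.le, intervalIntegral.integral_of_le hR.le]
  refine MeasureTheory.setIntegral_mono_on ?_ ?_ measurableSet_Ioc e
  · exact (intervalIntegrable_iff_integrableOn_Ioc_of_le hR.le).1 (g1.int hR ht)
  · exact (intervalIntegrable_iff_integrableOn_Ioc_of_le hR.le).1 (g2.int hR ht)

theorem I_nonneg (hR : 0 < R) {t : ℝ}
    (e : ∀ r ∈ Ioc 0 R, 0 ≤ h r t) : 0 ≤ I R h t := by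
  unfold I
  rw [intervalIntegral.integral_of_le hR.le]
  exact MeasureTheory.setIntegral_nonneg measurableSet_Ioc e

theorem I_hasDerivAt (hR : 0 < R) (g1 : Good R a c h1) (g2 : Good R a c h2) {t : ℝ}
    (ht : t ∈ Ioo a c)
    (hd : ∀ r ∈ Ioc 0 R, ∀ t ∈ Ioo a c, HasDerivAt (fun s => h1 r s) (h2 r t) t) :
    HasDerivAt (I R h1) (I R h2 t) t := by
  obtain ⟨B, hB⟩ := g2.bdd
  have hI : Ioo a c ∈ nhds t := isOpen_Ioo.mem_nhds ht
  unfold I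
  refine (intervalIntegral.hasDerivAt_integral_of_dominated_loc_of_deriv_le
    (F := fun s r => h1 r s) (F' := fun s r => h2 r s) (bound := fun _ => B)
    hI ?_ (g1.int hR ht) ?_ ?_ (by simp) ?_).2
  · filter_upwards [hI] with s hs
    rw [uIoc_of_le hR.le]
    exact (g1.cont s hs).aestronglyMeasurable measurableSet_Ioc
  · rw [uIoc_of_le hR.le]
    exact (g2.cont t ht).aestronglyMeasurable measurableSet_Ioc
  · rw [uIoc_of_le hR.le]
    exact MeasureTheory.ae_of_all _ fun r hr s hs => hB r hr s hs
  · rw [uIoc_of_le hR.le]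
    exact MeasureTheory.ae_of_all _ fun r hr s hs => hd r hr s hs

/-- FTC: `F = r * h` -/
theorem I_ftc (hR : 0 < R) (g1 : Good R a c h1) (g2 : Good R a c h2) {t : ℝ}
    (ht : t ∈ Ioo a c)
    (hd : ∀ r ∈ Ioo 0 R, HasDerivAt (fun s => s * h1 s t) (h2 r t) r) :
    I R h2 t = R * h1 R t := by
  have := intervalIntegral.integral_eq_sub_of_hasDerivAt_of_le (f := fun s => s * h1 s t)
    (f' := fun r => h2 r t) hR.le ?_ hd (g2.int hR ht)
  · unfold I
    rw [this]; ring
  · intro r hr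
    rcases hr.1.eq_or_lt with h0 | h0
    · subst h0
      obtain ⟨B, hB⟩ := g1.bdd
      have hB0 : 0 ≤ B := (abs_nonneg _).trans (hB R ⟨hR, le_rfl⟩ t ht)
      unfold ContinuousWithinAt
      simp only [zero_mul]
      rw [tendsto_zero_iff_norm_tendsto_zero]
      have hl : Tendsto (fun s : ℝ => |s| * B) (nhdsWithin 0 (Icc 0 R)) (nhds 0) := by
        have : Tendsto (fun s : ℝ => |s| * B) (nhds 0) (nhds (|0| * B)) := by
          apply Continuous.tendsto; fun_prop
        simp only [abs_zero, zero_mul] at this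
        exact this.mono_left nhdsWithin_le_nhds
      refine squeeze_zero' (Eventually.of_forall fun _ => norm_nonneg _) ?_ hl
      filter_upwards [self_mem_nhdsWithin] with s hs
      rw [Real.norm_eq_abs, abs_mul]
      rcases hs.1.eq_or_lt with h0 | h0
      · rw [← h0]; simp
      · exact mul_le_mul_of_nonneg_left (hB s ⟨h0, hs.2⟩ t ht) (abs_nonneg _)
    · have h1c : ContinuousWithinAt (fun s => s * h1 s t) (Ioc 0 R) r :=
        (continuousOn_id.mul (g1.cont t ht)) r ⟨h0, hr.2⟩
      refine h1c.mono_of_mem_nhdsWithin ?_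
      filter_upwards [self_mem_nhdsWithin, mem_nhdsWithin_of_mem_nhds (isOpen_Ioi.mem_nhds h0)]
        with s hs hs2
      exact ⟨hs2, hs.2⟩

/-- Cauchy-Schwarz with weight -/
theorem I_cs (hR : 0 < R) {w : ℝ → ℝ → ℝ} (gw : Good R a c w) (g1 : Good R a c h1)
    (g2 : Good R a c h2) {t : ℝ}
    (ht : t ∈ Ioo a c) (hw : ∀ r ∈ Ioc 0 R, 0 ≤ w r t) :
    (I R (fun r t => h1 r t * h2 r t * w r t) t) ^ 2 ≤
      I R (fun r t => h1 r t ^ 2 * w r t) t * I R (fun r t => h2 r t ^ 2 * w r t) t := by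
  set A := I R (fun r t => h1 r t ^ 2 * w r t) t with hA
  set B := I R (fun r t => h1 r t * h2 r t * w r t) t with hB
  set C := I R (fun r t => h2 r t ^ 2 * w r t) t with hC
  have gA : Good R a c (fun r t => h1 r t ^ 2 * w r t) := (g1.pow 2).mul gw
  have gB : Good R a c (fun r t => h1 r t * h2 r t * w r t) := (g1.mul g2).mul gw
  have gC : Good R a c (fun r t => h2 r t ^ 2 * w r t) := (g2.pow 2).mul gw
  have key : ∀ x y : ℝ, 0 ≤ x ^ 2 * A + 2 * x * y * B + y ^ 2 * C := by
    intro x y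
    have e : I R (fun r t => (x * h1 r t + y * h2 r t) ^ 2 * w r t) t
        = x ^ 2 * A + 2 * x * y * B + y ^ 2 * C := by
      rw [hA, hB, hC, ← I_smul (fun _ => x ^ 2), ← I_smul (fun _ => 2 * x * y),
        ← I_smul (fun _ => y ^ 2), ← I_add hR ((Good.const _).mul gA) ((Good.const _).mul gB) ht,
        ← I_add hR (((Good.const _).mul gA).add ((Good.const _).mul gB)) ((Good.const _).mul gC) ht]
      apply I_congr hR
      intro r _
      ring
    rw [← e]
    exact I_nonneg hR fun r hr => mul_nonneg (sq_nonneg _) (hw r hr)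
  have hA0 : 0 ≤ A := by simpa using key 1 0
  have k1 := key B (-A)
  have k2 := key (-1) B
  have k3 := key C (-B)
  have hC0 : 0 ≤ C := by simpa using key 0 1
  have h4 : 0 ≤ A * (A * C - B ^ 2) := by nlinarith
  have h5 : 0 ≤ C * (A * C - B ^ 2) := by nlinarith
  by_contra hcon
  push Not at hcon
  have hA1 : A = 0 := by
    rcases hA0.eq_or_lt with h | h
    · exact h.symm
    · nlinarith
  have hC1 : C = 0 := by
    rcases hC0.eq_or_lt with h | h
    · exact h.symm
    · nlinarith
  have k4 := key 1 (-B)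
  rw [hA1, hC1] at k4 hcon
  nlinarith

end ZN


namespace ZN

noncomputable def Pf (j : ℕ) (v vr : ℝ → ℝ → ℝ) (r t : ℝ) : ℝ :=
  vr r t + ((j : ℝ) + 1) / 2 * (v r t / r)

noncomputable def kap (j : ℕ) : ℝ := ((j : ℝ) + 1) * ((j : ℝ) + 3) / 4

noncomputable def Ef (j : ℕ) (v vr : ℝ → ℝ → ℝ) (r t : ℝ) : ℝ :=
  Pf j v vr r t ^ 2 + kap j * (v r t / r) ^ 2

noncomputable def Ff (j : ℕ) (v vr vt vrr : ℝ → ℝ → ℝ) (r t : ℝ) : ℝ :=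
  vt r t - vrr r t - ((j : ℝ) + 1) * ((r * vr r t - v r t) / r ^ 2)

noncomputable def Qf (j : ℕ) (ρ T : ℝ) (v vr vrr : ℝ → ℝ → ℝ) (r t : ℝ) : ℝ :=
  vrr r t + ((j : ℝ) + 1) * ((r * vr r t - v r t) / r ^ 2)
    - (r - ρ) / (2 * (T - t)) * Pf j v vr r t

noncomputable def Sf (j : ℕ) (ρ T : ℝ) (v vr vt : ℝ → ℝ → ℝ) (r t : ℝ) : ℝ :=
  vt r t - (r - ρ) / (2 * (T - t)) * Pf j v vr r t

noncomputable def Ptf (j : ℕ) (vt vrt : ℝ → ℝ → ℝ) (r t : ℝ) : ℝ :=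
  vrt r t + ((j : ℝ) + 1) / 2 * (vt r t / r)

noncomputable def Etf (j : ℕ) (v vr vt vrt : ℝ → ℝ → ℝ) (r t : ℝ) : ℝ :=
  2 * Pf j v vr r t * Ptf j vt vrt r t + 2 * kap j * (v r t / r) * (vt r t / r)

noncomputable def om (j : ℕ) (ρ T : ℝ) (r t : ℝ) : ℝ := r ^ (j + 1) * gs ρ T r t

structure Dat (j : ℕ) (R a c M C1 : ℝ) (v vr vt vrr vrt : ℝ → ℝ → ℝ) : Prop where
  hR : 0 < R
  dr : ∀ r ∈ Ioo 0 R, ∀ t ∈ Ioo a c, HasDerivAt (fun x => v x t) (vr r t) r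
  drr : ∀ r ∈ Ioo 0 R, ∀ t ∈ Ioo a c, HasDerivAt (fun x => vr x t) (vrr r t) r
  dtr : ∀ r ∈ Ioo 0 R, ∀ t ∈ Ioo a c, HasDerivAt (fun x => vt x t) (vrt r t) r
  dt : ∀ r ∈ Ioc 0 R, ∀ t ∈ Ioo a c, HasDerivAt (fun s => v r s) (vt r t) t
  drt : ∀ r ∈ Ioc 0 R, ∀ t ∈ Ioo a c, HasDerivAt (fun s => vr r s) (vrt r t) t
  cv : ∀ t ∈ Ioo a c, ContinuousOn (fun r => v r t) (Ioc 0 R)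
  cvr : ∀ t ∈ Ioo a c, ContinuousOn (fun r => vr r t) (Ioc 0 R)
  cvt : ∀ t ∈ Ioo a c, ContinuousOn (fun r => vt r t) (Ioc 0 R)
  cvrr : ∀ t ∈ Ioo a c, ContinuousOn (fun r => vrr r t) (Ioc 0 R)
  cvrt : ∀ t ∈ Ioo a c, ContinuousOn (fun r => vrt r t) (Ioc 0 R)
  bv : ∀ r ∈ Ioc 0 R, ∀ t ∈ Ioo a c, |v r t| ≤ M * r
  bvt : ∀ r ∈ Ioc 0 R, ∀ t ∈ Ioo a c, |vt r t| ≤ M * r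
  bvr : ∀ r ∈ Ioc 0 R, ∀ t ∈ Ioo a c, |vr r t| ≤ M
  bvrr : ∀ r ∈ Ioc 0 R, ∀ t ∈ Ioo a c, |vrr r t| ≤ M
  bvrt : ∀ r ∈ Ioc 0 R, ∀ t ∈ Ioo a c, |vrt r t| ≤ M
  b2 : ∀ r ∈ Ioc 0 R, ∀ t ∈ Ioo a c, |r * vr r t - v r t| ≤ M * r ^ 2
  vR : ∀ t ∈ Ioo a c, v R t = 0
  vtR : ∀ t ∈ Ioo a c, vt R t = 0
  hC1 : 0 ≤ C1
  hf : ∀ r ∈ Ioc 0 R, ∀ t ∈ Ioo a c, Ff j v vr vt vrr r t ^ 2 ≤ C1 * Ef j v vr r t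

theorem Dat.mono {j : ℕ} {R a c M C1 : ℝ} {v vr vt vrr vrt : ℝ → ℝ → ℝ}
    (d : Dat j R a c M C1 v vr vt vrr vrt) {a' c' : ℝ} (ha : a ≤ a') (hc : c' ≤ c) :
    Dat j R a' c' M C1 v vr vt vrr vrt := by
  have hs : ∀ t ∈ Ioo a' c', t ∈ Ioo a c := fun t ht => ⟨ha.trans_lt ht.1, ht.2.trans_le hc⟩
  exact ⟨d.hR, fun r hr t ht => d.dr r hr t (hs t ht), fun r hr t ht => d.drr r hr t (hs t ht),
    fun r hr t ht => d.dtr r hr t (hs t ht), fun r hr t ht => d.dt r hr t (hs t ht),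
    fun r hr t ht => d.drt r hr t (hs t ht), fun t ht => d.cv t (hs t ht),
    fun t ht => d.cvr t (hs t ht), fun t ht => d.cvt t (hs t ht), fun t ht => d.cvrr t (hs t ht),
    fun t ht => d.cvrt t (hs t ht), fun r hr t ht => d.bv r hr t (hs t ht),
    fun r hr t ht => d.bvt r hr t (hs t ht), fun r hr t ht => d.bvr r hr t (hs t ht),
    fun r hr t ht => d.bvrr r hr t (hs t ht), fun r hr t ht => d.bvrt r hr t (hs t ht),
    fun r hr t ht => d.b2 r hr t (hs t ht), fun t ht => d.vR t (hs t ht),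
    fun t ht => d.vtR t (hs t ht), d.hC1, fun r hr t ht => d.hf r hr t (hs t ht)⟩

section
variable {j : ℕ} {R a c M C1 : ℝ} {v vr vt vrr vrt : ℝ → ℝ → ℝ} {ρ T : ℝ}

theorem Dat.gvr (d : Dat j R a c M C1 v vr vt vrr vrt) : Good R a c vr := ⟨d.cvr, M, d.bvr⟩
theorem Dat.gvrr (d : Dat j R a c M C1 v vr vt vrr vrt) : Good R a c vrr := ⟨d.cvrr, M, d.bvrr⟩
theorem Dat.gvrt (d : Dat j R a c M C1 v vr vt vrr vrt) : Good R a c vrt := ⟨d.cvrt, M, d.bvrt⟩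

theorem Dat.gw (d : Dat j R a c M C1 v vr vt vrr vrt) : Good R a c (fun r t => v r t / r) := by
  refine ⟨fun t ht => (d.cv t ht).div continuousOn_id fun r hr => hr.1.ne', M, fun r hr t ht => ?_⟩
  rw [abs_div, abs_of_pos hr.1, div_le_iff₀ hr.1]
  exact d.bv r hr t ht

theorem Dat.gwt (d : Dat j R a c M C1 v vr vt vrr vrt) : Good R a c (fun r t => vt r t / r) := by
  refine ⟨fun t ht => (d.cvt t ht).div continuousOn_id fun r hr => hr.1.ne', M, fun r hr t ht => ?_⟩
  rw [abs_div, abs_of_pos hr.1, div_le_iff₀ hr.1]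
  exact d.bvt r hr t ht

theorem Dat.gz (d : Dat j R a c M C1 v vr vt vrr vrt) :
    Good R a c (fun r t => (r * vr r t - v r t) / r ^ 2) := by
  refine ⟨fun t ht => ((continuousOn_id.mul (d.cvr t ht)).sub (d.cv t ht)).div
    (continuousOn_id.pow 2) fun r hr => pow_ne_zero 2 hr.1.ne', M, fun r hr t ht => ?_⟩
  have : 0 < r ^ 2 := pow_pos hr.1 2
  rw [abs_div, abs_of_pos this, div_le_iff₀ this]
  exact d.b2 r hr t ht

theorem Dat.gv (d : Dat j R a c M C1 v vr vt vrr vrt) : Good R a c v :=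
  (d.gw.mul (Good.id d.hR)).congr fun _ hr _ _ => (div_mul_cancel₀ _ hr.1.ne').symm

theorem Dat.gvt (d : Dat j R a c M C1 v vr vt vrr vrt) : Good R a c vt :=
  (d.gwt.mul (Good.id d.hR)).congr fun _ hr _ _ => (div_mul_cancel₀ _ hr.1.ne').symm

theorem Dat.gP (d : Dat j R a c M C1 v vr vt vrr vrt) : Good R a c (Pf j v vr) :=
  d.gvr.add ((Good.const _).mul d.gw)

theorem Dat.gE (d : Dat j R a c M C1 v vr vt vrr vrt) : Good R a c (Ef j v vr) :=
  (d.gP.pow 2).add ((Good.const _).mul (d.gw.pow 2))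

theorem Dat.gF (d : Dat j R a c M C1 v vr vt vrr vrt) : Good R a c (Ff j v vr vt vrr) :=
  (d.gvt.sub d.gvrr).sub ((Good.const _).mul d.gz)

theorem Good.xt (hR : 0 < R) (hT : c < T) : Good R a c (fun r t => (r - ρ) / (2 * (T - t))) :=
  ((((Good.id hR).sub (Good.const ρ)).mul (Good.const (1 / 2))).mul (Good.inv_tau hT)).congr
    fun r _ t ht => by
      have : T - t ≠ 0 := by
        have : 0 < T - t := by linarith [ht.2]
        exact this.ne'
      field_simp

theorem Dat.gQ (d : Dat j R a c M C1 v vr vt vrr vrt) (hT : c < T) :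
    Good R a c (Qf j ρ T v vr vrr) :=
  (d.gvrr.add ((Good.const _).mul d.gz)).sub ((Good.xt d.hR hT).mul d.gP)

theorem Dat.gS (d : Dat j R a c M C1 v vr vt vrr vrt) (hT : c < T) :
    Good R a c (Sf j ρ T v vr vt) :=
  d.gvt.sub ((Good.xt d.hR hT).mul d.gP)

theorem Dat.gEt (d : Dat j R a c M C1 v vr vt vrr vrt) : Good R a c (Etf j v vr vt vrt) :=
  (((Good.const 2).mul d.gP).mul (d.gvrt.add ((Good.const _).mul d.gwt))).add
    (((Good.const _).mul d.gw).mul d.gwt)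

theorem Good.om (hR : 0 < R) (hT : c < T) : Good R a c (om j ρ T) :=
  ((Good.id hR).pow _).mul (Good.gs hT)

theorem Good.rg (hR : 0 < R) (hT : c < T) : Good R a c (fun r t => r ^ j * ZN.gs ρ T r t) :=
  ((Good.id hR).pow _).mul (Good.gs hT)

theorem Good.tau {T : ℝ} : Good R a c (fun _ t => T - t) := by
  refine ⟨fun _ _ => continuousOn_const, ⟨|T - a| + |T - c|, fun r _ t ht => ?_⟩⟩
  have := ht.1
  have := ht.2
  rcases abs_cases (T - t) with h | h <;> rcases abs_cases (T - a) with h1 | h1 <;>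
    rcases abs_cases (T - c) with h2 | h2 <;> linarith

theorem om_nonneg {r t : ℝ} (hr : r ∈ Ioc 0 R) : 0 ≤ om j ρ T r t :=
  mul_nonneg (pow_nonneg hr.1.le _) (gs_pos _ _ _ _).le

theorem Ef_nonneg {r t : ℝ} : 0 ≤ Ef j v vr r t := by
  unfold Ef kap; positivity

theorem rj_deriv (j : ℕ) (r : ℝ) (hr : 0 < r) :
    HasDerivAt (fun s : ℝ => s ^ j) (j * r ^ j / r) r := by
  refine (hasDerivAt_pow j r).congr_deriv ?_
  rcases j with _ | j
  · simp
  · have := hr.ne'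
    field_simp
    simp [pow_succ]

theorem Dat.dP (d : Dat j R a c M C1 v vr vt vrr vrt) {r t : ℝ} (hr : r ∈ Ioo 0 R)
    (ht : t ∈ Ioo a c) : HasDerivAt (fun s => Pf j v vr s t)
      (vrr r t + ((j : ℝ) + 1) / 2 * ((vr r t * r - v r t * 1) / r ^ 2)) r :=
  (d.drr r hr t ht).add (((d.dr r hr t ht).div (hasDerivAt_id r) hr.1.ne').const_mul _)

theorem Dat.idA (d : Dat j R a c M C1 v vr vt vrr vrt) (hT : c < T) {t : ℝ} (ht : t ∈ Ioo a c) :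
    I R (fun r t => v r t * Qf j ρ T v vr vrr r t * om j ρ T r t) t
      = - I R (fun r t => Ef j v vr r t * om j ρ T r t) t := by
  have g1 := (d.gv.mul (d.gQ (ρ := ρ) hT)).mul (Good.om (j := j) (ρ := ρ) d.hR hT)
  have g2 := d.gE.mul (Good.om (j := j) (ρ := ρ) d.hR hT)
  have g3 : Good R a c (fun r t => v r t * Pf j v vr r t * (r ^ j * gs ρ T r t)) :=
    (d.gv.mul d.gP).mul (Good.rg d.hR hT)
  have := I_ftc d.hR g3 (g1.add g2) ht ?_
  · rw [I_add d.hR g1 g2 ht, d.vR t ht] at this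
    linarith
  · intro r hr
    have h0 := hr.1.ne'
    have hτ : T - t ≠ 0 := by
      have : 0 < T - t := by linarith [ht.2]
      exact this.ne'
    have := (hasDerivAt_id r).mul (((d.dr r hr t ht).mul (d.dP hr ht)).mul
      ((rj_deriv j r hr.1).mul (gs_hasDerivAt_r ρ T r t)))
    refine this.congr_deriv ?_
    simp only [Pi.mul_apply, id]
    unfold Qf Ef om kap Pf
    rw [pow_succ]
    field_simp
    ring

theorem Dat.idB (d : Dat j R a c M C1 v vr vt vrr vrt) (hT : c < T) {t : ℝ} (ht : t ∈ Ioo a c) :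
    HasDerivAt (I R (fun r t => v r t ^ 2 * om j ρ T r t))
      (2 * I R (fun r t => v r t * Sf j ρ T v vr vt r t * om j ρ T r t) t
        - 1 / (2 * (T - t)) * I R (fun r t => v r t ^ 2 * om j ρ T r t) t) t := by
  have go := Good.om (j := j) (ρ := ρ) (a := a) d.hR hT
  have gx := Good.xt (ρ := ρ) (a := a) d.hR hT
  have gH : Good R a c (fun r t => v r t ^ 2 * om j ρ T r t) := (d.gv.pow 2).mul go
  have gS : Good R a c (fun r t => v r t * Sf j ρ T v vr vt r t * om j ρ T r t) :=
    (d.gv.mul (d.gS hT)).mul go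
  have gD : Good R a c (fun r t => (2 * v r t * vt r t
      - v r t ^ 2 * ((r - ρ) / (2 * (T - t))) ^ 2) * om j ρ T r t) :=
    ((((Good.const 2).mul d.gv).mul d.gvt).sub ((d.gv.pow 2).mul (gx.pow 2))).mul go
  have hd := I_hasDerivAt d.hR gH gD ht ?_
  · refine hd.congr_deriv ?_
    have g3 : Good R a c (fun r t => (r - ρ) / (2 * (T - t)) * v r t ^ 2 * (r ^ j * gs ρ T r t)) :=
      (gx.mul (d.gv.pow 2)).mul (Good.rg d.hR hT)
    have gS2 : Good R a c (fun r t => 2 * (v r t * Sf j ρ T v vr vt r t * om j ρ T r t)) :=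
      (Good.const 2).mul gS
    have gH2 : Good R a c (fun r t => (1 / 2 * (1 / (T - t))) * (v r t ^ 2 * om j ρ T r t)) :=
      ((Good.const (1/2)).mul (Good.inv_tau hT)).mul gH
    have := I_ftc d.hR g3 ((gD.sub gS2).add gH2) ht ?_
    · rw [I_add d.hR (gD.sub gS2) gH2 ht, I_sub d.hR gD gS2 ht, I_smul (fun _ => 2),
        I_smul (fun t => (1 / 2 * (1 / (T - t)))), d.vR t ht] at this
      have e : 1 / (2 * (T - t)) = 1 / 2 * (1 / (T - t)) := by rw [one_div_mul_one_div]
      rw [e]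
      linarith
    · intro r hr
      have h0 := hr.1.ne'
      have hτ : T - t ≠ 0 := by
        have : 0 < T - t := by linarith [ht.2]
        exact this.ne'
      have := (hasDerivAt_id r).mul ((((((hasDerivAt_id r).sub_const ρ).div_const (2 * (T - t)))).mul
        ((d.dr r hr t ht).pow 2)).mul
        ((rj_deriv j r hr.1).mul (gs_hasDerivAt_r ρ T r t)))
      refine this.congr_deriv ?_
      simp only [Pi.mul_apply, Pi.pow_apply, id]
      unfold Sf om Pf
      rw [pow_succ]
      field_simp
      simp
      ring
  · intro r hr t ht
    have hτ : T - t ≠ 0 := by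
      have : 0 < T - t := by linarith [ht.2]
      exact this.ne'
    have := ((d.dt r hr t ht).pow 2).mul
      ((gs_hasDerivAt_t ρ T r t (by linarith [ht.2])).const_mul (r ^ (j + 1)))
    refine this.congr_deriv ?_
    simp only [Pi.pow_apply]
    unfold om
    field_simp
    simp
    ring

theorem Dat.dE (d : Dat j R a c M C1 v vr vt vrr vrt) {r t : ℝ} (hr : r ∈ Ioc 0 R)
    (ht : t ∈ Ioo a c) : HasDerivAt (fun s => Ef j v vr r s) (Etf j v vr vt vrt r t) t := by
  have h0 := hr.1.ne'
  have h1 : HasDerivAt (fun s => Pf j v vr r s) (Ptf j vt vrt r t) t :=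
    (d.drt r hr t ht).add (((d.dt r hr t ht).div_const r).const_mul _)
  have := (h1.pow 2).add ((((d.dt r hr t ht).div_const r).pow 2).const_mul (kap j))
  refine this.congr_deriv ?_
  unfold Etf
  simp
  ring

theorem Dat.idC (d : Dat j R a c M C1 v vr vt vrr vrt) (hρ : ρ ∈ Icc 0 R)
    (hT : c < T) {t : ℝ} (ht : t ∈ Ioo a c) :
    ∃ D' : ℝ, HasDerivAt (I R (fun r t => Ef j v vr r t * om j ρ T r t)) D' t ∧
      (T - t) * D' ≤ - 2 * (T - t) *
        I R (fun r t => Qf j ρ T v vr vrr r t * Sf j ρ T v vr vt r t * om j ρ T r t) t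
        + 1 / 2 * I R (fun r t => Ef j v vr r t * om j ρ T r t) t := by
  have go := Good.om (j := j) (ρ := ρ) (a := a) d.hR hT
  have gx := Good.xt (ρ := ρ) (a := a) d.hR hT
  have gE : Good R a c (fun r t => Ef j v vr r t * om j ρ T r t) := d.gE.mul go
  have gD : Good R a c (fun r t => (Etf j v vr vt vrt r t
      - Ef j v vr r t * ((r - ρ) / (2 * (T - t))) ^ 2) * om j ρ T r t) :=
    (d.gEt.sub (d.gE.mul (gx.pow 2))).mul go
  have hd := I_hasDerivAt d.hR gE gD ht ?_
  · refine ⟨_, hd, ?_⟩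
    have gQS : Good R a c
        (fun r t => Qf j ρ T v vr vrr r t * Sf j ρ T v vr vt r t * om j ρ T r t) :=
      ((d.gQ hT).mul (d.gS hT)).mul go
    have gW : Good R a c (fun r t => ρ * kap j * (v r t / r) ^ 2 * (r ^ j * gs ρ T r t)) :=
      ((Good.const _).mul (d.gw.pow 2)).mul (Good.rg d.hR hT)
    have g3 : Good R a c (fun r t => (2 * (T - t) * Pf j v vr r t * Sf j ρ T v vr vt r t
        + (r - ρ) * (1 / 2) * Ef j v vr r t) * (r ^ j * gs ρ T r t)) :=
      (((((Good.const 2).mul Good.tau).mul d.gP).mul (d.gS hT)).add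
        ((((Good.id d.hR).sub (Good.const ρ)).mul (Good.const (1/2))).mul d.gE)).mul
          (Good.rg d.hR hT)
    have g41 : Good R a c (fun r t => (T - t) * ((Etf j v vr vt vrt r t
      - Ef j v vr r t * ((r - ρ) / (2 * (T - t))) ^ 2) * om j ρ T r t)) := Good.tau.mul gD
    have g42 : Good R a c (fun r t => (2 * (T - t)) *
        (Qf j ρ T v vr vrr r t * Sf j ρ T v vr vt r t * om j ρ T r t)) :=
      ((Good.const 2).mul Good.tau).mul gQS
    have g43 : Good R a c (fun r t => (1 / 2) * (Ef j v vr r t * om j ρ T r t)) :=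
      (Good.const _).mul gE
    have := I_ftc d.hR g3 (((g41.add g42).sub g43).add gW) ht ?_
    · have hW : 0 ≤ I R (fun r t => ρ * kap j * (v r t / r) ^ 2 * (r ^ j * gs ρ T r t)) t := by
        refine I_nonneg d.hR fun r hr => ?_
        have h1 := hρ.1
        have h2 := (gs_pos ρ T r t).le
        have h3 := hr.1
        unfold kap
        positivity
      have hB : R * ((2 * (T - t) * Pf j v vr R t * Sf j ρ T v vr vt R t
        + (R - ρ) * (1 / 2) * Ef j v vr R t) * (R ^ j * gs ρ T R t)) ≤ 0 := by
        have hτ : T - t ≠ 0 := by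
          have : 0 < T - t := by linarith [ht.2]
          exact this.ne'
        have e : 2 * (T - t) * Pf j v vr R t * Sf j ρ T v vr vt R t
          + (R - ρ) * (1 / 2) * Ef j v vr R t = - ((R - ρ) * (1 / 2) * Pf j v vr R t ^ 2) := by
          unfold Sf Ef
          rw [d.vR t ht, d.vtR t ht]
          field_simp
          ring
        rw [e]
        have h1 : 0 ≤ R - ρ := by linarith [hρ.2]
        have h2 := (gs_pos ρ T R t).le
        have h3 := d.hR.le
        have : 0 ≤ R * ((R - ρ) * (1 / 2) * Pf j v vr R t ^ 2 * (R ^ j * gs ρ T R t)) := by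
          positivity
        linarith
      rw [I_add d.hR ((g41.add g42).sub g43) gW ht, I_sub d.hR (g41.add g42) g43 ht,
        I_add d.hR g41 g42 ht, I_smul (fun t => T - t), I_smul (fun t => 2 * (T - t)),
        I_smul (fun _ => 1 / 2)] at this
      linarith
    · intro r hr
      have h0 := hr.1.ne'
      have hτ : T - t ≠ 0 := by
        have : 0 < T - t := by linarith [ht.2]
        exact this.ne'
      have hx := ((hasDerivAt_id r).sub_const ρ)
      have hS := (d.dtr r hr t ht).sub ((hx.div_const (2 * (T - t))).mul (d.dP hr ht))
      have hE := ((d.dP hr ht).pow 2).add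
        ((((d.dr r hr t ht).div (hasDerivAt_id r) h0).pow 2).const_mul (kap j))
      have := (hasDerivAt_id r).mul (((((d.dP hr ht).const_mul (2 * (T - t))).mul hS).add
        ((hx.mul_const (1/2)).mul hE)).mul
        ((rj_deriv j r hr.1).mul (gs_hasDerivAt_r ρ T r t)))
      refine this.congr_deriv ?_
      simp only [Pi.mul_apply, Pi.pow_apply, Pi.add_apply, Pi.sub_apply, Pi.div_apply, id,
        Nat.reduceSub, pow_one, Nat.cast_ofNat]
      unfold Sf Qf Etf Ef om Ptf Pf kap
      rw [pow_succ]
      field_simp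
      ring
  · intro r hr t ht
    have hτ : T - t ≠ 0 := by
      have : 0 < T - t := by linarith [ht.2]
      exact this.ne'
    have := (d.dE hr ht).mul
      ((gs_hasDerivAt_t ρ T r t (by linarith [ht.2])).const_mul (r ^ (j + 1)))
    refine this.congr_deriv ?_
    unfold om
    field_simp
    ring
end
end ZN


namespace ZN

theorem mono_helper {f f' : ℝ → ℝ} {p q : ℝ} (hpq : p ≤ q)
    (hd : ∀ t ∈ Icc p q, HasDerivAt f (f' t) t) (h0 : ∀ t ∈ Icc p q, 0 ≤ f' t) : f p ≤ f q := by
  have : MonotoneOn f (Icc p q) := by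
    apply monotoneOn_of_deriv_nonneg (convex_Icc p q)
    · exact fun t ht => (hd t ht).continuousAt.continuousWithinAt
    · intro t ht
      exact (hd t (interior_subset ht)).differentiableAt.differentiableWithinAt
    · intro t ht
      rw [(hd t (interior_subset ht)).deriv]
      exact h0 t (interior_subset ht)
  exact this ⟨le_rfl, hpq⟩ ⟨hpq, le_rfl⟩ hpq

section
variable {j : ℕ} {R a c M C1 : ℝ} {v vr vt vrr vrt : ℝ → ℝ → ℝ} {ρ T : ℝ}

noncomputable def Hf (j : ℕ) (R ρ T : ℝ) (v : ℝ → ℝ → ℝ) : ℝ → ℝ :=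
  I R (fun r t => v r t ^ 2 * om j ρ T r t)

noncomputable def Df (j : ℕ) (R ρ T : ℝ) (v vr : ℝ → ℝ → ℝ) : ℝ → ℝ :=
  I R (fun r t => Ef j v vr r t * om j ρ T r t)

theorem Hf_nonneg (hR : 0 < R) (t : ℝ) : 0 ≤ Hf j R ρ T v t :=
  I_nonneg hR fun _ hr => mul_nonneg (sq_nonneg _) (om_nonneg hr)

theorem Df_nonneg (hR : 0 < R) (t : ℝ) : 0 ≤ Df j R ρ T v vr t :=
  I_nonneg hR fun _ hr => mul_nonneg Ef_nonneg (om_nonneg hr)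

/-- Summary of the integral identities in terms of numbers. -/
theorem Dat.summary (d : Dat j R a c M C1 v vr vt vrr vrt) (hρ : ρ ∈ Icc 0 R)
    (hT : c < T) {t : ℝ} (ht : t ∈ Ioo a c) :
    ∃ D' vz vf zz ff : ℝ, HasDerivAt (Df j R ρ T v vr) D' t ∧
      HasDerivAt (Hf j R ρ T v)
        (2 * (vz + vf / 2) - 1 / (2 * (T - t)) * Hf j R ρ T v t) t ∧
      (T - t) * D' ≤ -2 * (T - t) * (zz - ff / 4) + 1 / 2 * Df j R ρ T v vr t ∧
      Df j R ρ T v vr t = - (vz - vf / 2) ∧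
      vz ^ 2 ≤ Hf j R ρ T v t * zz ∧ vf ^ 2 ≤ Hf j R ρ T v t * ff ∧ 0 ≤ zz ∧
      ff ≤ C1 * Df j R ρ T v vr t := by
  have go := Good.om (j := j) (ρ := ρ) (a := a) d.hR hT
  have gQ := d.gQ (ρ := ρ) hT
  have gZ : Good R a c (fun r t => Qf j ρ T v vr vrr r t + (1 / 2) * Ff j v vr vt vrr r t) :=
    gQ.add ((Good.const _).mul d.gF)
  obtain ⟨D', hD', hDle⟩ := d.idC hρ hT ht
  have hH := d.idB (ρ := ρ) hT ht
  have hA := d.idA (ρ := ρ) hT ht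
  have gvz := (d.gv.mul gZ).mul go
  have gvf := (d.gv.mul d.gF).mul go
  have gzz := (gZ.pow 2).mul go
  have gff := (d.gF.pow 2).mul go
  have gvf2 := (Good.const (1/2)).mul gvf
  have gff2 := (Good.const (1/4)).mul gff
  have e1 : I R (fun r t => v r t * Qf j ρ T v vr vrr r t * om j ρ T r t) t =
      I R (fun r t => v r t * (Qf j ρ T v vr vrr r t + (1 / 2) * Ff j v vr vt vrr r t)
        * om j ρ T r t) t - 1 / 2 * I R (fun r t => v r t * Ff j v vr vt vrr r t * om j ρ T r t) t := by
    rw [← I_smul (fun _ => 1/2), ← I_sub d.hR gvz gvf2 ht]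
    exact I_congr d.hR fun r hr => by ring
  have e2 : I R (fun r t => v r t * Sf j ρ T v vr vt r t * om j ρ T r t) t =
      I R (fun r t => v r t * (Qf j ρ T v vr vrr r t + (1 / 2) * Ff j v vr vt vrr r t)
        * om j ρ T r t) t + 1 / 2 * I R (fun r t => v r t * Ff j v vr vt vrr r t * om j ρ T r t) t := by
    rw [← I_smul (fun _ => 1/2), ← I_add d.hR gvz gvf2 ht]
    exact I_congr d.hR fun r hr => by unfold Sf Qf Ff; ring
  have e3 : I R (fun r t => Qf j ρ T v vr vrr r t * Sf j ρ T v vr vt r t * om j ρ T r t) t =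
      I R (fun r t => (Qf j ρ T v vr vrr r t + (1 / 2) * Ff j v vr vt vrr r t) ^ 2
        * om j ρ T r t) t - 1 / 4 * I R (fun r t => Ff j v vr vt vrr r t ^ 2 * om j ρ T r t) t := by
    rw [← I_smul (fun _ => 1/4), ← I_sub d.hR gzz gff2 ht]
    exact I_congr d.hR fun r hr => by unfold Sf Qf Ff; ring
  refine ⟨D', _, _, _, _, hD', hH.congr_deriv ?_, ?_, ?_,
    I_cs d.hR go d.gv gZ ht fun r hr => om_nonneg hr,
    I_cs d.hR go d.gv d.gF ht fun r hr => om_nonneg hr, ?_, ?_⟩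
  · rw [e2]; unfold Hf; ring
  · rw [e3] at hDle; unfold Df; linarith
  · rw [e1] at hA; unfold Df; linarith
  · exact I_nonneg d.hR fun r hr => mul_nonneg (sq_nonneg _) (om_nonneg hr)
  · unfold Df
    rw [← I_smul (fun _ => C1)]
    refine I_mono d.hR gff ((Good.const C1).mul (d.gE.mul go)) ht fun r hr => ?_
    rw [← mul_assoc]
    exact mul_le_mul_of_nonneg_right (d.hf r hr t ht) (om_nonneg hr)

theorem Dat.freq (d : Dat j R a c M C1 v vr vt vrr vrt) (hρ : ρ ∈ Icc 0 R)
    (hT : c < T) {p q : ℝ} (hp : p ∈ Ioo a c) (hq : q ∈ Ioo a c) (hpq : p ≤ q) {N0 : ℝ}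
    (hN0 : 0 ≤ N0) (hN : (T - p) * Df j R ρ T v vr p ≤ N0 * Hf j R ρ T v p) (K : ℕ)
    (hK : 3 * (N0 * Real.exp (C1 / 2 * (q - p))) + C1 * (T - p) + 1 / 2 ≤ K) {η : ℝ} (hη : 0 < η) :
    (Hf j R ρ T v p + η * √(T - p)) / (T - p) ^ K ≤
      (Hf j R ρ T v q + η * √(T - q)) / (T - q) ^ K := by
  have hsub : ∀ t ∈ Icc p q, t ∈ Ioo a c := fun t ht => ⟨hp.1.trans_le ht.1, ht.2.trans_lt hq.2⟩
  set H := Hf j R ρ T v with hHdef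
  set D := Df j R ρ T v vr with hDdef
  have hτ : ∀ t ∈ Icc p q, 0 < T - t := fun t ht => by linarith [(hsub t ht).2]
  set H' : ℝ → ℝ := fun t => H t + η * √(T - t) with hH'def
  have hH0 : ∀ t, 0 ≤ H t := fun t => Hf_nonneg d.hR t
  have hD0 : ∀ t, 0 ≤ D t := fun t => Df_nonneg d.hR t
  have hpos : ∀ t ∈ Icc p q, 0 < H' t := fun t ht => by
    have := Real.sqrt_pos.2 (hτ t ht)
    have := hH0 t
    simp only [hH'def]
    positivity
  -- derivative facts
  have key : ∀ t ∈ Icc p q, ∃ D' h' : ℝ, HasDerivAt D D' t ∧ HasDerivAt H' h' t ∧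
      (-D t + (T - t) * D') * H' t - (T - t) * D t * h' ≤ C1 / 2 * ((T - t) * D t) * H' t ∧
      -(3 * D t) - C1 * H' t - 1 / (2 * (T - t)) * H' t ≤ h' := by
    intro t ht
    obtain ⟨D', vz, vf, zz, ff, h1, h2, h3, h4, h5, h6, h7, h8⟩ := d.summary hρ hT (hsub t ht)
    have ht0 := hτ t ht
    have hs : HasDerivAt (fun s => η * √(T - s)) (-(1 / (2 * (T - t)) * (η * √(T - t)))) t := by
      have := (((hasDerivAt_id t).const_sub T).sqrt ht0.ne').const_mul η
      refine this.congr_deriv ?_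
      have e : √(T - t) ^ 2 = T - t := Real.sq_sqrt ht0.le
      have e0 : √(T - t) ≠ 0 := (Real.sqrt_pos.2 ht0).ne'
      have : id t = t := rfl
      rw [this]
      field_simp
      rw [e]
    refine ⟨D', _, h1, h2.add hs, ?_, ?_⟩
    · have hHH : H t ≤ H' t := by
        have := Real.sqrt_nonneg (T - t)
        simp only [hH'def]
        nlinarith
      have hH't := hpos t ht
      have e : 2 * (vz + vf / 2) - 1 / (2 * (T - t)) * H t + -(1 / (2 * (T - t)) * (η * √(T - t)))
          = 2 * (vz + vf / 2) - 1 / (2 * (T - t)) * H' t := by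
        simp only [hH'def]; ring
      rw [e]
      have e2 : (T - t) * D t * (2 * (vz + vf / 2) - 1 / (2 * (T - t)) * H' t)
          = 2 * (T - t) * D t * (vz + vf / 2) - D t * H' t / 2 := by
        field_simp
      rw [e2]
      have i1 : (-D t + (T - t) * D') * H' t ≤
          (-D t + (-2 * (T - t) * (zz - ff / 4) + 1 / 2 * D t)) * H' t :=
        mul_le_mul_of_nonneg_right (by linarith) hH't.le
      have i2 : (T - t) * vz ^ 2 ≤ (T - t) * (H' t * zz) :=
        mul_le_mul_of_nonneg_left (h5.trans (mul_le_mul_of_nonneg_right hHH h7)) ht0.le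
      have i3 : (T - t) * H' t * ff ≤ (T - t) * H' t * (C1 * D t) :=
        mul_le_mul_of_nonneg_left h8 (by positivity)
      have i4 : 0 ≤ (T - t) * vf ^ 2 := by positivity
      have i5 : (T - t) * D t * (vz + vf / 2) = -((T - t) * (vz ^ 2 - vf ^ 2 / 4)) := by
        have h4' : D t = -(vz - vf / 2) := h4
        rw [h4']; ring
      nlinarith
    · have e : 2 * (vz + vf / 2) - 1 / (2 * (T - t)) * H t + -(1 / (2 * (T - t)) * (η * √(T - t)))
          = 2 * (vz + vf / 2) - 1 / (2 * (T - t)) * H' t := by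
        simp only [hH'def]; ring
      rw [e]
      have hHH : H t ≤ H' t := by
        have := Real.sqrt_nonneg (T - t)
        simp only [hH'def]
        nlinarith
      have hvf : -(C1 * H' t + D t) ≤ 2 * vf := by
        have hC := d.hC1
        have h9 : vf ^ 2 ≤ H t * (C1 * D t) := h6.trans (mul_le_mul_of_nonneg_left h8 (hH0 t))
        have h10 : (2 * vf) ^ 2 ≤ (C1 * H t + D t) ^ 2 := by nlinarith [sq_nonneg (C1 * H t - D t)]
        have h11 : 0 ≤ C1 * H t + D t := by
          have := hH0 t; have := hD0 t; positivity
        have := (abs_le.1 (abs_le_of_sq_le_sq h10 h11)).1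
        have := mul_le_mul_of_nonneg_left hHH hC
        linarith
      linarith
  choose! D' h' kD kh k1 k2 using key
  -- frequency bound
  have hNb : ∀ t ∈ Icc p q, (T - t) * D t ≤ N0 * Real.exp (C1 / 2 * (q - p)) * H' t := by
    intro t ht
    have hsub2 : ∀ s ∈ Icc p t, s ∈ Icc p q := fun s hs => ⟨hs.1, hs.2.trans ht.2⟩
    have := mono_helper (f := fun s => -(Real.exp (-(C1 / 2) * (s - p)) * ((T - s) * D s / H' s)))
      (f' := fun s => -(Real.exp (-(C1 / 2) * (s - p)) * (-(C1 / 2) * 1) * ((T - s) * D s / H' s)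
        + Real.exp (-(C1 / 2) * (s - p)) *
          ((((-1) * D s + (T - s) * D' s) * H' s - (T - s) * D s * h' s) / H' s ^ 2))) ht.1 ?_ ?_
    · simp only [sub_self, mul_zero, Real.exp_zero, one_mul] at this
      have h1 : (T - p) * D p / H' p ≤ N0 := by
        rw [div_le_iff₀ (hpos p ⟨le_rfl, hpq⟩)]
        refine hN.trans (mul_le_mul_of_nonneg_left ?_ hN0)
        have := Real.sqrt_nonneg (T - p)
        simp only [hH'def]
        nlinarith
      have h2 : Real.exp (-(C1 / 2) * (t - p)) * ((T - t) * D t / H' t) ≤ N0 := by linarith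
      rw [neg_mul, Real.exp_neg, inv_mul_le_iff₀ (Real.exp_pos _), div_le_iff₀ (hpos t ht)] at h2
      refine h2.trans (mul_le_mul_of_nonneg_right ?_ (hpos t ht).le)
      rw [mul_comm]
      refine mul_le_mul_of_nonneg_left ?_ hN0
      rw [Real.exp_le_exp]
      have := d.hC1
      exact mul_le_mul_of_nonneg_left (by linarith [ht.2]) (by positivity)
    · intro s hs
      have hs' := hsub2 s hs
      exact ((((((hasDerivAt_id s).sub_const p).const_mul (-(C1 / 2))).exp).mul
        (((((hasDerivAt_id s).const_sub T).mul (kD s hs')).div (kh s hs') (hpos s hs').ne'))).neg)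
    · intro s hs
      have hs' := hsub2 s hs
      have hp' := hpos s hs'
      have e : -(Real.exp (-(C1 / 2) * (s - p)) * (-(C1 / 2) * 1) * ((T - s) * D s / H' s)
        + Real.exp (-(C1 / 2) * (s - p)) *
          ((((-1) * D s + (T - s) * D' s) * H' s - (T - s) * D s * h' s) / H' s ^ 2))
          = Real.exp (-(C1 / 2) * (s - p)) * ((C1 / 2 * ((T - s) * D s) * H' s -
            ((-D s + (T - s) * D' s) * H' s - (T - s) * D s * h' s)) / H' s ^ 2) := by
        field_simp
        ring
      rw [e]
      have := k1 s hs'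
      exact mul_nonneg (Real.exp_pos _).le (div_nonneg (by linarith) (by positivity))
  refine mono_helper (f := fun t => H' t / (T - t) ^ K)
    (f' := fun t => (h' t * (T - t) ^ K - H' t * (K * (T - t) ^ (K - 1) * (-1))) / ((T - t) ^ K) ^ 2)
    hpq ?_ ?_
  · intro t ht
    exact (kh t ht).div (((hasDerivAt_id t).const_sub T).pow K) (pow_pos (hτ t ht) K).ne'
  · intro t ht
    have ht0 := hτ t ht
    apply div_nonneg _ (by positivity)
    have hK1 : K * (T - t) ^ (K - 1) = K * (T - t) ^ K / (T - t) := by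
      rcases K with _ | K
      · simp
      · field_simp
        simp [pow_succ, mul_comm]
    rw [hK1]
    have e : h' t * (T - t) ^ K - H' t * (K * (T - t) ^ K / (T - t) * -1)
      = (T - t) ^ K / (T - t) * ((T - t) * h' t + K * H' t) := by
      field_simp
      ring
    rw [e]
    apply mul_nonneg (by positivity)
    have i1 := mul_le_mul_of_nonneg_left (k2 t ht) ht0.le
    have i2 := hNb t ht
    have e2 : (T - t) * (-(3 * D t) - C1 * H' t - 1 / (2 * (T - t)) * H' t)
      = -(3 * ((T - t) * D t)) - C1 * (T - t) * H' t - 1 / 2 * H' t := by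
      field_simp
    rw [e2] at i1
    have i3 := mul_le_mul_of_nonneg_right hK (hpos t ht).le
    have i4 : C1 * (T - t) * H' t ≤ C1 * (T - p) * H' t :=
      mul_le_mul_of_nonneg_right (mul_le_mul_of_nonneg_left (by linarith [ht.1]) d.hC1)
        (hpos t ht).le
    nlinarith

/-- forward uniqueness inequality -/
theorem Dat.forward (d : Dat j R a c M C1 v vr vt vrr vrt) (hρ : ρ ∈ Icc 0 R)
    (hT : c < T) {p q : ℝ} (hp : p ∈ Ioo a c) (hq : q ∈ Ioo a c) (hpq : p ≤ q)
    (h0 : Hf j R ρ T v p = 0) : Hf j R ρ T v q = 0 := by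
  have hsub : ∀ t ∈ Icc p q, t ∈ Ioo a c := fun t ht => ⟨hp.1.trans_le ht.1, ht.2.trans_lt hq.2⟩
  have key : ∀ t ∈ Icc p q, ∃ h' : ℝ, HasDerivAt (Hf j R ρ T v) h' t ∧
      h' ≤ C1 * Hf j R ρ T v t := by
    intro t ht
    obtain ⟨D', vz, vf, zz, ff, h1, h2, h3, h4, h5, h6, h7, h8⟩ := d.summary hρ hT (hsub t ht)
    refine ⟨_, h2, ?_⟩
    have hH0 := Hf_nonneg (j := j) (v := v) (ρ := ρ) (T := T) d.hR t
    have hD0 := Df_nonneg (j := j) (v := v) (vr := vr) (ρ := ρ) (T := T) d.hR t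
    have hC := d.hC1
    have h9 := h6.trans (mul_le_mul_of_nonneg_left h8 hH0)
    have h10 : (2 * vf) ^ 2 ≤ (C1 * Hf j R ρ T v t + Df j R ρ T v vr t) ^ 2 := by
      nlinarith [sq_nonneg (C1 * Hf j R ρ T v t - Df j R ρ T v vr t)]
    have h11 : 0 ≤ C1 * Hf j R ρ T v t + Df j R ρ T v vr t := by positivity
    have := (abs_le.1 (abs_le_of_sq_le_sq h10 h11)).2
    have ht0 : 0 < T - t := by linarith [(hsub t ht).2]
    have : 0 ≤ 1 / (2 * (T - t)) * Hf j R ρ T v t := by positivity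
    linarith
  choose! h' k1 k2 using key
  have := mono_helper (f := fun s => -(Real.exp (-C1 * (s - p)) * Hf j R ρ T v s))
    (f' := fun s => -(Real.exp (-C1 * (s - p)) * (-C1 * 1) * Hf j R ρ T v s
      + Real.exp (-C1 * (s - p)) * h' s)) hpq ?_ ?_
  · simp only [h0, mul_zero, neg_zero] at this
    have h1 : Real.exp (-C1 * (q - p)) * Hf j R ρ T v q ≤ 0 := by linarith
    have h2 := Hf_nonneg (j := j) (v := v) (ρ := ρ) (T := T) d.hR q
    have h3 := Real.exp_pos (-C1 * (q - p))
    nlinarith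
  · intro s hs
    exact ((((hasDerivAt_id s).sub_const p).const_mul (-C1)).exp.mul (k1 s hs)).neg
  · intro s hs
    have e : -(Real.exp (-C1 * (s - p)) * (-C1 * 1) * Hf j R ρ T v s
      + Real.exp (-C1 * (s - p)) * h' s) =
      Real.exp (-C1 * (s - p)) * (C1 * Hf j R ρ T v s - h' s) := by ring
    rw [e]
    exact mul_nonneg (Real.exp_pos _).le (by linarith [k2 s hs])

end
end ZN


namespace ZN

theorem I_eq_zero {R a c : ℝ} {h : ℝ → ℝ → ℝ} (hR : 0 < R) (g : Good R a c h) {t : ℝ}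
    (ht : t ∈ Ioo a c) (h0 : ∀ r ∈ Ioc 0 R, 0 ≤ h r t) (hI : I R h t = 0) :
    ∀ r ∈ Ioc 0 R, h r t = 0 := by
  have hint := (intervalIntegrable_iff_integrableOn_Ioc_of_le hR.le).1 (g.int hR ht)
  unfold I at hI
  rw [intervalIntegral.integral_of_le hR.le,
    MeasureTheory.setIntegral_eq_zero_iff_of_nonneg_ae
      ((MeasureTheory.ae_restrict_iff' measurableSet_Ioc).2 (MeasureTheory.ae_of_all _ h0)) hint] at hI
  exact MeasureTheory.Measure.eqOn_Ioc_of_ae_eq MeasureTheory.volume hI (g.cont t ht)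
    continuousOn_const

section
variable {j : ℕ} {R a c M C1 : ℝ} {v vr vt vrr vrt : ℝ → ℝ → ℝ} {ρ T : ℝ}

theorem Dat.zero_of_Hf (d : Dat j R a c M C1 v vr vt vrr vrt) (hT : c < T) {p : ℝ}
    (hp : p ∈ Ioo a c) (h0 : Hf j R ρ T v p = 0) : ∀ r ∈ Ioc 0 R, v r p = 0 := by
  intro r hr
  have := I_eq_zero d.hR ((d.gv.pow 2).mul (Good.om (j := j) (ρ := ρ) d.hR hT)) hp
    (fun r hr => mul_nonneg (sq_nonneg _) (om_nonneg hr)) h0 r hr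
  rcases mul_eq_zero.1 this with h | h
  · exact pow_eq_zero_iff (two_ne_zero) |>.1 h
  · exact absurd h (mul_pos (pow_pos hr.1 _) (gs_pos _ _ _ _)).ne'

theorem Dat.forward_unique (d : Dat j R a c M C1 v vr vt vrr vrt) {p q : ℝ} (hp : p ∈ Ioo a c)
    (hq : q ∈ Ioo a c) (hpq : p ≤ q) (h0 : ∀ r ∈ Ioc 0 R, v r p = 0) :
    ∀ r ∈ Ioc 0 R, v r q = 0 := by
  have hT : c < c + 1 := by linarith
  refine d.zero_of_Hf (ρ := 0) hT hq (d.forward ⟨le_rfl, d.hR.le⟩ hT hp hq hpq ?_)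
  have : Hf j R 0 (c + 1) v p = I R (fun _ _ => 0) p :=
    I_congr d.hR fun r hr => by simp [h0 r hr]
  rw [this]
  simp [I]

theorem gauss_bound (x ε : ℝ) (hε : 0 < ε) (n : ℕ) :
    x ^ (2 * n) * Real.exp (-x ^ 2 / (4 * ε)) ≤ n.factorial * (4 * ε) ^ n := by
  have h1 := Real.pow_div_factorial_le_exp (x := x ^ 2 / (4 * ε)) (by positivity) n
  rw [neg_div, Real.exp_neg, ← div_eq_mul_inv, div_le_iff₀ (Real.exp_pos _)]
  rw [div_pow, div_div, div_le_iff₀ (by positivity)] at h1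
  rw [pow_mul]
  linarith

theorem Dat.unique (d : Dat j R a c M C1 v vr vt vrr vrt) (hρ : ρ ∈ Icc 0 R) {p q : ℝ}
    (hp : a < p) (hpq : p < q) (hq : q < c)
    (hflat : ∀ n : ℕ, ∃ B : ℝ, ∀ r ∈ Ioc 0 R, |v r q| ≤ B * |r - ρ| ^ n) :
    ∀ r ∈ Ioc 0 R, v r p = 0 := by
  have hpI : p ∈ Ioo a c := ⟨hp, hpq.trans hq⟩
  have hqI : q ∈ Ioo a c := ⟨hp.trans hpq, hq⟩
  have hR := d.hR
  have gJ : Good R a c (fun r t => v r t ^ 2 * r ^ (j + 1)) :=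
    (d.gv.pow 2).mul ((Good.id hR).pow _)
  have gD : Good R a c (fun r t => Ef j v vr r t * r ^ (j + 1)) :=
    d.gE.mul ((Good.id hR).pow _)
  set J := I R (fun r t => v r t ^ 2 * r ^ (j + 1)) p with hJ
  set Db := I R (fun r t => Ef j v vr r t * r ^ (j + 1)) p with hDb
  have hJ0 : 0 ≤ J := I_nonneg hR fun r hr => mul_nonneg (sq_nonneg _) (pow_nonneg hr.1.le _)
  have hDb0 : 0 ≤ Db := I_nonneg hR fun r hr => mul_nonneg Ef_nonneg (pow_nonneg hr.1.le _)
  rcases hJ0.eq_or_lt with hJz | hJpos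
  · intro r hr
    have := I_eq_zero hR gJ hpI
      (fun r hr => mul_nonneg (sq_nonneg _) (pow_nonneg hr.1.le _)) hJz.symm r hr
    rcases mul_eq_zero.1 this with h | h
    · exact pow_eq_zero_iff (two_ne_zero) |>.1 h
    · exact absurd h (pow_pos hr.1 _).ne'
  exfalso
  set g0 := Real.exp (-(R ^ 2 / (4 * (q - p)))) with hg0
  have hg0p : 0 < g0 := Real.exp_pos _
  set N0 := (q - p + 1) * Db / (g0 * J) with hN0
  have hqp : 0 < q - p := by linarith
  have hN00 : 0 ≤ N0 := by positivity
  obtain ⟨K, hK⟩ := exists_nat_ge (3 * (N0 * Real.exp (C1 / 2 * (q - p))) + C1 * (q - p + 1) + 1 / 2)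
  obtain ⟨B, hB⟩ := hflat (K + 1)
  -- main lower bound
  have low : ∀ ε : ℝ, 0 < ε → ε ≤ 1 →
      g0 * J / (q - p + 1) ^ K ≤ Hf j R ρ (q + ε) v q / ε ^ K := by
    intro ε hε hε1
    set T := q + ε with hTdef
    set c' := min c (q + ε / 2) with hc'
    have hc'T : c' < T := (min_le_right _ _).trans_lt (by linarith)
    have hqc' : q < c' := lt_min hq (by linarith)
    have d' := d.mono (le_refl a) (min_le_left c (q + ε / 2))
    have hpI' : p ∈ Ioo a c' := ⟨hp, hpq.trans hqc'⟩
    have hqI' : q ∈ Ioo a c' := ⟨hp.trans hpq, hqc'⟩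
    have go := Good.om (j := j) (ρ := ρ) (a := a) hR hc'T
    have gJ' : Good R a c' (fun r t => v r t ^ 2 * r ^ (j + 1)) :=
      (d'.gv.pow 2).mul ((Good.id hR).pow _)
    have gD' : Good R a c' (fun r t => Ef j v vr r t * r ^ (j + 1)) :=
      d'.gE.mul ((Good.id hR).pow _)
    have hHlow : g0 * J ≤ Hf j R ρ T v p := by
      rw [hJ, ← I_smul (fun _ => g0)]
      refine I_mono hR ((Good.const g0).mul gJ') ((d'.gv.pow 2).mul go) hpI' fun r hr => ?_
      have hg : g0 ≤ gs ρ T r p := by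
        rw [hg0]
        unfold gs
        rw [Real.exp_le_exp, neg_div]
        apply neg_le_neg
        have : (r - ρ) ^ 2 ≤ R ^ 2 := by
          apply sq_le_sq'
          · linarith [hr.1, hρ.2]
          · linarith [hr.2, hρ.1]
        have h2 : 4 * (q - p) ≤ 4 * (T - p) := by rw [hTdef]; linarith
        exact div_le_div₀ (by positivity) this (by positivity) h2
      have h3 : 0 ≤ v r p ^ 2 * r ^ (j + 1) := mul_nonneg (sq_nonneg _) (pow_nonneg hr.1.le _)
      have := mul_le_mul_of_nonneg_right hg h3
      unfold om
      linarith
    have hDup : Df j R ρ T v vr p ≤ Db := by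
      refine I_mono hR (d'.gE.mul go) gD' hpI' fun r hr => ?_
      have h3 : 0 ≤ Ef j v vr r p * r ^ (j + 1) := mul_nonneg Ef_nonneg (pow_nonneg hr.1.le _)
      have := mul_le_mul_of_nonneg_left (gs_le_one ρ T r p (by linarith)) h3
      unfold om
      linarith
    have hTp : T - p = q - p + ε := by rw [hTdef]; ring
    have hTq : T - q = ε := by rw [hTdef]; ring
    have hN : (T - p) * Df j R ρ T v vr p ≤ N0 * Hf j R ρ T v p := by
      calc (T - p) * Df j R ρ T v vr p ≤ (q - p + 1) * Db := by
            apply mul_le_mul (by linarith) hDup (Df_nonneg hR _) (by linarith)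
        _ = N0 * (g0 * J) := by rw [hN0]; field_simp
        _ ≤ _ := mul_le_mul_of_nonneg_left hHlow hN00
    have hK' : 3 * (N0 * Real.exp (C1 / 2 * (q - p))) + C1 * (T - p) + 1 / 2 ≤ K := by
      have : C1 * (T - p) ≤ C1 * (q - p + 1) :=
        mul_le_mul_of_nonneg_left (by linarith) d.hC1
      linarith
    have hf := fun η hη => d'.freq hρ hc'T hpI' hqI' hpq.le hN00 hN K hK' (η := η) hη
    have hf0 : Hf j R ρ T v p / (T - p) ^ K ≤ Hf j R ρ T v q / (T - q) ^ K := by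
      refine le_of_forall_pos_le_add fun δ hδ => ?_
      have hX : 0 ≤ √(T - q) / (T - q) ^ K := by
        rw [hTq]; positivity
      set X := √(T - q) / (T - q) ^ K with hXd
      have hY : 0 ≤ √(T - p) / (T - p) ^ K := by
        rw [hTp]; positivity
      have hη : 0 < δ / (X + 1) := by positivity
      have := hf _ hη
      rw [add_div, add_div, mul_div_assoc, mul_div_assoc, ← hXd] at this
      have h1 : δ / (X + 1) * X ≤ δ := by
        rw [div_mul_eq_mul_div, div_le_iff₀ (by positivity)]
        nlinarith
      have h2 : 0 ≤ δ / (X + 1) * (√(T - p) / (T - p) ^ K) := by positivity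
      linarith
    rw [hTq] at hf0
    refine le_trans ?_ hf0
    rw [hTp]
    have : (q - p + ε) ^ K ≤ (q - p + 1) ^ K := pow_le_pow_left₀ (by positivity) (by linarith) K
    exact div_le_div₀ (Hf_nonneg hR _) hHlow (by positivity) this
  set C := R * (B ^ 2 * R ^ (j + 1) * ((K + 1).factorial * 4 ^ (K + 1))) with hC
  have hC0 : 0 ≤ C := by positivity
  have up : ∀ ε : ℝ, 0 < ε → Hf j R ρ (q + ε) v q ≤ C * ε ^ (K + 1) := by
    intro ε hε
    set c' := min c (q + ε / 2) with hc'
    have hc'T : c' < q + ε := (min_le_right _ _).trans_lt (by linarith)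
    have hqc' : q < c' := lt_min hq (by linarith)
    have d' := d.mono (le_refl a) (min_le_left c (q + ε / 2))
    have hqI' : q ∈ Ioo a c' := ⟨hp.trans hpq, hqc'⟩
    have e : C * ε ^ (K + 1) = I R (fun _ _ =>
        B ^ 2 * R ^ (j + 1) * ((K + 1).factorial * (4 * ε) ^ (K + 1))) q := by
      unfold I
      rw [intervalIntegral.integral_const, mul_pow, smul_eq_mul, hC]
      ring
    rw [e]
    refine I_mono hR ((d'.gv.pow 2).mul (Good.om (j := j) (ρ := ρ) (a := a) hR hc'T))
      (Good.const _) hqI' fun r hr => ?_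
    have h1 : v r q ^ 2 ≤ B ^ 2 * (r - ρ) ^ (2 * (K + 1)) := by
      have := hB r hr
      have h2 := pow_le_pow_left₀ (abs_nonneg _) this 2
      rw [sq_abs, mul_pow, ← pow_mul, mul_comm (K + 1) 2, pow_mul |r - ρ|, sq_abs, ← pow_mul] at h2
      exact h2
    have h2 := gauss_bound (r - ρ) ε hε (K + 1)
    have h3 : r ^ (j + 1) ≤ R ^ (j + 1) := pow_le_pow_left₀ hr.1.le hr.2 _
    have h4 := gs_pos ρ (q + ε) r q
    have h5 : gs ρ (q + ε) r q = Real.exp (-(r - ρ) ^ 2 / (4 * ε)) := by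
      unfold gs; congr 3; ring
    unfold om
    have hr0 := hr.1.le
    calc v r q ^ 2 * (r ^ (j + 1) * gs ρ (q + ε) r q)
        ≤ (B ^ 2 * (r - ρ) ^ (2 * (K + 1))) * (R ^ (j + 1) * gs ρ (q + ε) r q) := by
          apply mul_le_mul h1 (mul_le_mul_of_nonneg_right h3 h4.le) (by positivity)
          exact (sq_nonneg _).trans h1
      _ = B ^ 2 * R ^ (j + 1) * ((r - ρ) ^ (2 * (K + 1)) * gs ρ (q + ε) r q) := by ring
      _ ≤ _ := by
          rw [h5]
          exact mul_le_mul_of_nonneg_left h2 (by positivity)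
  set c0 := g0 * J / (q - p + 1) ^ K with hc0
  have hc0p : 0 < c0 := by positivity
  have fin : ∀ ε : ℝ, 0 < ε → ε ≤ 1 → c0 ≤ C * ε := by
    intro ε hε hε1
    refine (low ε hε hε1).trans ?_
    rw [div_le_iff₀ (by positivity)]
    refine (up ε hε).trans (le_of_eq ?_)
    ring
  have h1 := fin (min 1 (c0 / (2 * (C + 1)))) (by positivity) (min_le_left _ _)
  have h2 : C * min 1 (c0 / (2 * (C + 1))) ≤ C * (c0 / (2 * (C + 1))) :=
    mul_le_mul_of_nonneg_left (min_le_right _ _) hC0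
  have h3 : C * (c0 / (2 * (C + 1))) < c0 := by
    rw [mul_div_assoc', div_lt_iff₀ (by positivity)]
    nlinarith
  linarith

end
end ZN

namespace ZN

theorem flat_aux {R : ℝ} (hR : 0 < R) (n : ℕ) : ∀ f : ℝ → ℝ, ContDiffOn ℝ (⊤ : ℕ∞) f (Icc 0 R) →
    ∀ ρ ∈ Icc 0 R, AccPt ρ (𝓟 {r ∈ Icc 0 R | f r = 0}) →
    ∃ B, 0 ≤ B ∧ ∀ r ∈ Icc 0 R, |f r| ≤ B * |r - ρ| ^ n := by
  induction n with
  | zero =>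
    intro f hf ρ hρ _
    obtain ⟨B, hB⟩ := isCompact_Icc.exists_bound_of_continuousOn hf.continuousOn
    refine ⟨|B|, abs_nonneg _, fun r hr => ?_⟩
    have := hB r hr
    rw [Real.norm_eq_abs] at this
    simpa using this.trans (le_abs_self B)
  | succ n ih =>
    intro f hf ρ hρ hacc
    have hu : UniqueDiffOn ℝ (Icc 0 R) := uniqueDiffOn_Icc hR
    have hf' : ContDiffOn ℝ (⊤ : ℕ∞) (derivWithin f (Icc 0 R)) (Icc 0 R) :=
      hf.derivWithin hu (by simp)
    have hd : ∀ x ∈ Icc 0 R, HasDerivWithinAt f (derivWithin f (Icc 0 R) x) (Icc 0 R) x :=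
      fun x hx => ((hf.differentiableOn (by simp)) x hx).hasDerivWithinAt
    have hρ0 : f ρ = 0 := by
      have hcl : IsClosed {r ∈ Icc 0 R | f r = 0} :=
        hf.continuousOn.preimage_isClosed_of_isClosed isClosed_Icc isClosed_singleton
      have : ρ ∈ closure {r ∈ Icc 0 R | f r = 0} := by
        exact hacc.clusterPt.mem_closure
      rw [hcl.closure_eq] at this
      exact this.2
    have hacc' : AccPt ρ (𝓟 {r ∈ Icc 0 R | derivWithin f (Icc 0 R) r = 0}) := by
      rw [accPt_iff_nhds] at hacc ⊢
      intro U hU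
      obtain ⟨ε, hε, hball⟩ := Metric.mem_nhds_iff.1 hU
      obtain ⟨y, ⟨hyU, hyI, hy0⟩, hne⟩ := hacc _ (Metric.ball_mem_nhds ρ hε)
      rw [Metric.mem_ball, Real.dist_eq] at hyU
      have key : ∀ p q : ℝ, p ∈ Icc 0 R → q ∈ Icc 0 R → p < q → f p = 0 → f q = 0 →
          ∃ z ∈ Ioo p q, derivWithin f (Icc 0 R) z = 0 := by
        intro p q hp hq hpq h1 h2
        refine exists_hasDerivAt_eq_zero hpq (hf.continuousOn.mono (Icc_subset_Icc hp.1 hq.2))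
          (h1.trans h2.symm) (fun x hx => ?_)
        have hx' : x ∈ Ioo 0 R := ⟨hp.1.trans_lt hx.1, hx.2.trans_le hq.2⟩
        exact (hd x (Ioo_subset_Icc_self hx')).hasDerivAt (Icc_mem_nhds hx'.1 hx'.2)
      rcases lt_or_gt_of_ne hne with h | h
      · obtain ⟨z, hz, hz0⟩ := key y ρ hyI hρ h hy0 hρ0
        refine ⟨z, ⟨hball ?_, ⟨hyI.1.trans hz.1.le, hz.2.le.trans hρ.2⟩, hz0⟩, hz.2.ne⟩
        rw [Metric.mem_ball, Real.dist_eq, abs_lt]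
        rw [abs_lt] at hyU
        constructor <;> linarith [hz.1, hz.2]
      · obtain ⟨z, hz, hz0⟩ := key ρ y hρ hyI h hρ0 hy0
        refine ⟨z, ⟨hball ?_, ⟨hρ.1.trans hz.1.le, hz.2.le.trans hyI.2⟩, hz0⟩, hz.1.ne'⟩
        rw [Metric.mem_ball, Real.dist_eq, abs_lt]
        rw [abs_lt] at hyU
        constructor <;> linarith [hz.1, hz.2]
    obtain ⟨B, hB0, hB⟩ := ih _ hf' ρ hρ hacc'
    refine ⟨B, hB0, fun r hr => ?_⟩
    have hsub : uIcc ρ r ⊆ Icc 0 R := by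
      rw [← segment_eq_uIcc]; exact (convex_Icc 0 R).segment_subset hρ hr
    have := (convex_uIcc ρ r).norm_image_sub_le_of_norm_hasDerivWithin_le
      (f := f) (f' := derivWithin f (Icc 0 R)) (C := B * |r - ρ| ^ n)
      (fun x hx => (hd x (hsub hx)).mono hsub) (fun x hx => ?_) left_mem_uIcc right_mem_uIcc
    · rw [hρ0, sub_zero, Real.norm_eq_abs, Real.norm_eq_abs] at this
      rw [pow_succ, ← mul_assoc]; exact this
    · rw [Real.norm_eq_abs]
      refine (hB x (hsub hx)).trans ?_
      have : |x - ρ| ≤ |r - ρ| := abs_sub_left_of_mem_uIcc hx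
      gcongr

structure Pk (R t1 t2 : ℝ) (v vr vt vrr vrt : ℝ → ℝ → ℝ) : Prop where
  dr : ∀ r ∈ Icc 0 R, ∀ t ∈ Ioo t1 t2, HasDerivWithinAt (fun x => v x t) (vr r t) (Icc 0 R) r
  drr : ∀ r ∈ Icc 0 R, ∀ t ∈ Ioo t1 t2, HasDerivWithinAt (fun x => vr x t) (vrr r t) (Icc 0 R) r
  dtr : ∀ r ∈ Icc 0 R, ∀ t ∈ Ioo t1 t2, HasDerivWithinAt (fun x => vt x t) (vrt r t) (Icc 0 R) r
  dt : ∀ r ∈ Icc 0 R, ∀ t ∈ Ioo t1 t2, HasDerivAt (fun s => v r s) (vt r t) t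
  drt : ∀ r ∈ Icc 0 R, ∀ t ∈ Ioo t1 t2, HasDerivAt (fun s => vr r s) (vrt r t) t
  cv : ContinuousOn (fun p : ℝ × ℝ => v p.1 p.2) (Icc 0 R ×ˢ Ioo t1 t2)
  cvr : ContinuousOn (fun p : ℝ × ℝ => vr p.1 p.2) (Icc 0 R ×ˢ Ioo t1 t2)
  cvt : ContinuousOn (fun p : ℝ × ℝ => vt p.1 p.2) (Icc 0 R ×ˢ Ioo t1 t2)
  cvrr : ContinuousOn (fun p : ℝ × ℝ => vrr p.1 p.2) (Icc 0 R ×ˢ Ioo t1 t2)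
  cvrt : ContinuousOn (fun p : ℝ × ℝ => vrt p.1 p.2) (Icc 0 R ×ˢ Ioo t1 t2)

theorem uds {R t1 t2 : ℝ} (hR : 0 < R) : UniqueDiffOn ℝ (Icc 0 R ×ˢ Ioo t1 t2) :=
  (uniqueDiffOn_Icc hR).prod (uniqueDiffOn_Ioo t1 t2)

theorem partial_deriv {R t1 t2 : ℝ} (hR : 0 < R) {f : ℝ × ℝ → ℝ}
    (hf : ContDiffOn ℝ (⊤ : ℕ∞) f (Icc 0 R ×ˢ Ioo t1 t2)) (w : ℝ × ℝ) :
    ContDiffOn ℝ (⊤ : ℕ∞) (fun p => fderivWithin ℝ f (Icc 0 R ×ˢ Ioo t1 t2) p w)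
      (Icc 0 R ×ˢ Ioo t1 t2) :=
  (hf.fderivWithin (uds hR) (by simp)).clm_apply contDiffOn_const

theorem partial_r {R t1 t2 : ℝ} {f : ℝ × ℝ → ℝ}
    (hf : ContDiffOn ℝ (⊤ : ℕ∞) f (Icc 0 R ×ˢ Ioo t1 t2)) {r t : ℝ} (hr : r ∈ Icc 0 R)
    (ht : t ∈ Ioo t1 t2) : HasDerivWithinAt (fun x => f (x, t))
      (fderivWithin ℝ f (Icc 0 R ×ˢ Ioo t1 t2) (r, t) (1, 0)) (Icc 0 R) r := by
  have h1 := ((hf.differentiableOn (by simp)) (r, t) ⟨hr, ht⟩).hasFDerivWithinAt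
  have h2 : HasDerivWithinAt (fun x : ℝ => (x, t)) ((1 : ℝ), (0 : ℝ)) (Icc 0 R) r :=
    (hasDerivWithinAt_id r _).prodMk (hasDerivWithinAt_const r _ t)
  have h3 : MapsTo (fun x : ℝ => (x, t)) (Icc 0 R) (Icc 0 R ×ˢ Ioo t1 t2) := fun x hx => ⟨hx, ht⟩
  exact h1.comp_hasDerivWithinAt r h2 h3

theorem partial_t {R t1 t2 : ℝ} {f : ℝ × ℝ → ℝ}
    (hf : ContDiffOn ℝ (⊤ : ℕ∞) f (Icc 0 R ×ˢ Ioo t1 t2)) {r t : ℝ} (hr : r ∈ Icc 0 R)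
    (ht : t ∈ Ioo t1 t2) : HasDerivAt (fun s => f (r, s))
      (fderivWithin ℝ f (Icc 0 R ×ˢ Ioo t1 t2) (r, t) (0, 1)) t := by
  have h1 := ((hf.differentiableOn (by simp)) (r, t) ⟨hr, ht⟩).hasFDerivWithinAt
  have h2 : HasDerivWithinAt (fun s : ℝ => (r, s)) ((0 : ℝ), (1 : ℝ)) (Ioo t1 t2) t :=
    (hasDerivWithinAt_const t _ r).prodMk (hasDerivWithinAt_id t _)
  have h3 : MapsTo (fun s : ℝ => (r, s)) (Ioo t1 t2) (Icc 0 R ×ˢ Ioo t1 t2) := fun x hx => ⟨hr, hx⟩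
  exact (h1.comp_hasDerivWithinAt t h2 h3).hasDerivAt (Ioo_mem_nhds ht.1 ht.2)

theorem partial_symm {R t1 t2 : ℝ} (hR : 0 < R) {f : ℝ × ℝ → ℝ}
    (hf : ContDiffOn ℝ (⊤ : ℕ∞) f (Icc 0 R ×ˢ Ioo t1 t2)) {p : ℝ × ℝ}
    (hp : p ∈ Icc 0 R ×ˢ Ioo t1 t2) (u w : ℝ × ℝ) :
    fderivWithin ℝ (fun p => fderivWithin ℝ f (Icc 0 R ×ˢ Ioo t1 t2) p u)
      (Icc 0 R ×ˢ Ioo t1 t2) p w = 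
    fderivWithin ℝ (fun p => fderivWithin ℝ f (Icc 0 R ×ˢ Ioo t1 t2) p w)
      (Icc 0 R ×ˢ Ioo t1 t2) p u := by
  have hd : ContDiffOn ℝ (⊤ : ℕ∞) (fderivWithin ℝ f (Icc 0 R ×ˢ Ioo t1 t2))
    (Icc 0 R ×ˢ Ioo t1 t2) := hf.fderivWithin (uds hR) (by simp)
  have hd' := (hd.differentiableOn (by simp)) p hp
  have hS : IsSymmSndFDerivWithinAt ℝ f (Icc 0 R ×ˢ Ioo t1 t2) p := by
    refine (hf p hp).isSymmSndFDerivWithinAt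
      (by rw [minSmoothness_of_isRCLikeNormedField]; exact WithTop.coe_le_coe.2 le_top) (uds hR) ?_ hp
    rw [interior_prod_eq, interior_Icc, interior_Ioo, closure_prod_eq, closure_Ioo hR.ne]
    exact ⟨hp.1, subset_closure hp.2⟩
  have e : ∀ u w : ℝ × ℝ, fderivWithin ℝ (fun p => fderivWithin ℝ f (Icc 0 R ×ˢ Ioo t1 t2) p u)
      (Icc 0 R ×ˢ Ioo t1 t2) p w = fderivWithin ℝ (fderivWithin ℝ f (Icc 0 R ×ˢ Ioo t1 t2))
      (Icc 0 R ×ˢ Ioo t1 t2) p w u := by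
    intro u w
    have := hd'.hasFDerivWithinAt.clm_apply (hasFDerivWithinAt_const u p _)
    rw [this.fderivWithin (uds hR p hp)]
    simp
  rw [e, e]
  exact hS w u

theorem exists_Pk {R t1 t2 : ℝ} (hR : 0 < R) {v : ℝ → ℝ → ℝ}
    (hf : ContDiffOn ℝ (⊤ : ℕ∞) (fun p : ℝ × ℝ => v p.1 p.2) (Icc 0 R ×ˢ Ioo t1 t2)) :
    ∃ vr vt vrr vrt, Pk R t1 t2 v vr vt vrr vrt := by
  have h1 := partial_deriv hR hf (1, 0)
  have h2 := partial_deriv hR hf (0, 1)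
  refine ⟨fun r t => fderivWithin ℝ (fun p : ℝ × ℝ => v p.1 p.2) (Icc 0 R ×ˢ Ioo t1 t2) (r, t) (1, 0),
    fun r t => fderivWithin ℝ (fun p : ℝ × ℝ => v p.1 p.2) (Icc 0 R ×ˢ Ioo t1 t2) (r, t) (0, 1),
    fun r t => fderivWithin ℝ (fun p => fderivWithin ℝ (fun p : ℝ × ℝ => v p.1 p.2)
      (Icc 0 R ×ˢ Ioo t1 t2) p (1, 0)) (Icc 0 R ×ˢ Ioo t1 t2) (r, t) (1, 0),
    fun r t => fderivWithin ℝ (fun p => fderivWithin ℝ (fun p : ℝ × ℝ => v p.1 p.2)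
      (Icc 0 R ×ˢ Ioo t1 t2) p (1, 0)) (Icc 0 R ×ˢ Ioo t1 t2) (r, t) (0, 1),
    ⟨fun r hr t ht => partial_r hf hr ht, fun r hr t ht => partial_r h1 hr ht,
      fun r hr t ht => ?_, fun r hr t ht => partial_t hf hr ht,
      fun r hr t ht => partial_t h1 hr ht, hf.continuousOn, h1.continuousOn, h2.continuousOn,
      (partial_deriv hR h1 (1, 0)).continuousOn, (partial_deriv hR h1 (0, 1)).continuousOn⟩⟩
  have := partial_r h2 hr ht
  rw [partial_symm hR hf ⟨hr, ht⟩] at this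
  exact this

end ZN

namespace ZN

theorem mvt0 {R K r : ℝ} {f f' : ℝ → ℝ} (hd : ∀ x ∈ Icc 0 R, HasDerivWithinAt f (f' x) (Icc 0 R) x)
    (h0 : f 0 = 0) (hr : r ∈ Icc 0 R) (hK : ∀ x ∈ Icc 0 r, |f' x| ≤ K) : |f r| ≤ K * r := by
  have hsub : Icc 0 r ⊆ Icc 0 R := Icc_subset_Icc_right hr.2
  have := (convex_Icc 0 r).norm_image_sub_le_of_norm_hasDerivWithin_le
    (fun x hx => (hd x (hsub hx)).mono hsub) (C := K) (fun x hx => by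
      rw [Real.norm_eq_abs]; exact hK x hx) (left_mem_Icc.2 hr.1) (right_mem_Icc.2 hr.1)
  rwa [h0, sub_zero, sub_zero, Real.norm_eq_abs, Real.norm_eq_abs, abs_of_nonneg hr.1] at this

theorem cbound {R t1 t2 a c : ℝ} (ha : t1 < a) (hc : c < t2) {f : ℝ → ℝ → ℝ}
    (hf : ContinuousOn (fun p : ℝ × ℝ => f p.1 p.2) (Icc 0 R ×ˢ Ioo t1 t2)) :
    ∃ B, 0 ≤ B ∧ ∀ r ∈ Icc 0 R, ∀ t ∈ Icc a c, |f r t| ≤ B := by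
  obtain ⟨B, hB⟩ := (isCompact_Icc.prod (isCompact_Icc (a := a) (b := c))).exists_bound_of_continuousOn
    (hf.mono (Set.prod_mono_right (Icc_subset_Ioo ha hc)))
  exact ⟨|B|, abs_nonneg _, fun r hr t ht => (hB (r, t) ⟨hr, ht⟩).trans (le_abs_self B)⟩

theorem Pk.bound {R t1 t2 a c : ℝ} {v vr vt vrr vrt : ℝ → ℝ → ℝ} (k : Pk R t1 t2 v vr vt vrr vrt)
    (ha : t1 < a) (hc : c < t2) : ∃ B, 0 ≤ B ∧ ∀ r ∈ Icc 0 R, ∀ t ∈ Icc a c,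
      |v r t| ≤ B ∧ |vr r t| ≤ B ∧ |vt r t| ≤ B ∧ |vrr r t| ≤ B ∧ |vrt r t| ≤ B := by
  obtain ⟨B1, h1, H1⟩ := cbound ha hc k.cv
  obtain ⟨B2, h2, H2⟩ := cbound ha hc k.cvr
  obtain ⟨B3, h3, H3⟩ := cbound ha hc k.cvt
  obtain ⟨B4, h4, H4⟩ := cbound ha hc k.cvrr
  obtain ⟨B5, h5, H5⟩ := cbound ha hc k.cvrt
  refine ⟨B1 + B2 + B3 + B4 + B5, by positivity, fun r hr t ht => ⟨?_, ?_, ?_, ?_, ?_⟩⟩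
  · linarith [H1 r hr t ht]
  · linarith [H2 r hr t ht]
  · linarith [H3 r hr t ht]
  · linarith [H4 r hr t ht]
  · linarith [H5 r hr t ht]

theorem slice {R t1 t2 t : ℝ} {f : ℝ → ℝ → ℝ} (ht : t ∈ Ioo t1 t2)
    (hf : ContinuousOn (fun p : ℝ × ℝ => f p.1 p.2) (Icc 0 R ×ˢ Ioo t1 t2)) :
    ContinuousOn (fun r => f r t) (Icc 0 R) := by
  have h3 : MapsTo (fun x : ℝ => (x, t)) (Icc 0 R) (Icc 0 R ×ˢ Ioo t1 t2) := fun x hx => ⟨hx, ht⟩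
  exact hf.comp (by fun_prop : ContinuousOn (fun x : ℝ => (x, t)) (Icc 0 R)) h3

theorem Pk.toDat {j : ℕ} {R t1 t2 a c C1 : ℝ} {v vr vt vrr vrt : ℝ → ℝ → ℝ}
    (k : Pk R t1 t2 v vr vt vrr vrt) (hR : 0 < R)
    (ha : t1 < a) (hc : c < t2) (h0 : ∀ t ∈ Ioo t1 t2, v 0 t = 0)
    (hvR : ∀ t ∈ Ioo t1 t2, v R t = 0) (hC1 : 0 ≤ C1)
    (hf : ∀ r ∈ Ioo 0 R, ∀ t ∈ Ioo a c, Ff j v vr vt vrr r t ^ 2 ≤ C1 * Ef j v vr r t) :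
    ∃ M, Dat j R a c M C1 v vr vt vrr vrt := by
  obtain ⟨M, hM, H⟩ := k.bound ha hc
  have hs : ∀ {t}, t ∈ Ioo a c → t ∈ Ioo t1 t2 := fun ht => ⟨ha.trans ht.1, ht.2.trans hc⟩
  have hio : Ioc 0 R ⊆ Icc 0 R := Ioc_subset_Icc_self
  have hoo : ∀ {r}, r ∈ Ioo 0 R → Icc 0 R ∈ nhds r := fun hr => Icc_mem_nhds hr.1 hr.2
  have htr : ∀ r ∈ Icc 0 R, (∀ t ∈ Ioo t1 t2, v r t = 0) → ∀ t ∈ Ioo t1 t2, vt r t = 0 := by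
    intro r hr h t ht
    have h1 := k.dt r hr t ht
    have h2 : (fun s => v r s) =ᶠ[nhds t] fun _ => 0 := by
      filter_upwards [Ioo_mem_nhds ht.1 ht.2] with s hs using h s hs
    exact h1.unique ((hasDerivAt_const t (0:ℝ)).congr_of_eventuallyEq h2)
  have l0 : (0:ℝ) ∈ Icc 0 R := ⟨le_rfl, hR.le⟩
  refine ⟨M, hR, ?_, ?_, ?_, ?_, ?_, ?_, ?_, ?_, ?_, ?_, ?_, ?_, ?_, ?_, ?_, ?_, ?_, ?_, hC1, ?_⟩
  · exact fun r hr t ht => (k.dr r (Ioo_subset_Icc_self hr) t (hs ht)).hasDerivAt (hoo hr)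
  · exact fun r hr t ht => (k.drr r (Ioo_subset_Icc_self hr) t (hs ht)).hasDerivAt (hoo hr)
  · exact fun r hr t ht => (k.dtr r (Ioo_subset_Icc_self hr) t (hs ht)).hasDerivAt (hoo hr)
  · exact fun r hr t ht => k.dt r (hio hr) t (hs ht)
  · exact fun r hr t ht => k.drt r (hio hr) t (hs ht)
  · exact fun t ht => (slice (hs ht) k.cv).mono hio
  · exact fun t ht => (slice (hs ht) k.cvr).mono hio
  · exact fun t ht => (slice (hs ht) k.cvt).mono hio
  · exact fun t ht => (slice (hs ht) k.cvrr).mono hio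
  · exact fun t ht => (slice (hs ht) k.cvrt).mono hio
  · exact fun r hr t ht => mvt0 (f := fun x => v x t) (fun x hx => k.dr x hx t (hs ht)) (h0 t (hs ht)) (hio hr)
      (fun x hx => (H x ⟨hx.1, hx.2.trans hr.2⟩ t (Ioo_subset_Icc_self ht)).2.1)
  · exact fun r hr t ht => mvt0 (f := fun x => vt x t) (fun x hx => k.dtr x hx t (hs ht))
      (htr 0 l0 h0 t (hs ht)) (hio hr)
      (fun x hx => (H x ⟨hx.1, hx.2.trans hr.2⟩ t (Ioo_subset_Icc_self ht)).2.2.2.2)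
  · exact fun r hr t ht => (H r (hio hr) t (Ioo_subset_Icc_self ht)).2.1
  · exact fun r hr t ht => (H r (hio hr) t (Ioo_subset_Icc_self ht)).2.2.2.1
  · exact fun r hr t ht => (H r (hio hr) t (Ioo_subset_Icc_self ht)).2.2.2.2
  · intro r hr t ht
    have := mvt0 (R := R) (K := M * r) (f := fun x => x * vr x t - v x t) (f' := fun x => x * vrr x t)
      (fun x hx => by
        have := ((hasDerivWithinAt_id x (Icc 0 R)).mul (k.drr x hx t (hs ht))).sub (k.dr x hx t (hs ht))
        refine this.congr_deriv ?_
        simp) (by simp [h0 t (hs ht)]) (hio hr)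
      (fun x hx => by
        have := (H x ⟨hx.1, hx.2.trans hr.2⟩ t (Ioo_subset_Icc_self ht)).2.2.2.1
        rw [abs_mul, abs_of_nonneg hx.1, mul_comm]
        exact mul_le_mul this hx.2 hx.1 hM)
    refine this.trans (le_of_eq ?_)
    ring
  · exact fun t ht => hvR t (hs ht)
  · exact fun t ht => htr R ⟨hR.le, le_rfl⟩ hvR t (hs ht)
  · intro r hr t ht
    have c1 := (slice (hs ht) k.cv).mono hio
    have c2 := (slice (hs ht) k.cvr).mono hio
    have c3 := (slice (hs ht) k.cvt).mono hio
    have c4 := (slice (hs ht) k.cvrr).mono hio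
    have hne : ∀ x ∈ Ioc 0 R, x ≠ 0 := fun x hx => hx.1.ne'
    have hne2 : ∀ x ∈ Ioc 0 R, x ^ 2 ≠ 0 := fun x hx => pow_ne_zero _ hx.1.ne'
    have q1 : ContinuousOn (fun x => v x t / x) (Ioc 0 R) := c1.div continuousOn_id hne
    have q2 : ContinuousOn (fun x => (x * vr x t - v x t) / x ^ 2) (Ioc 0 R) :=
      ((continuousOn_id.mul c2).sub c1).div (by fun_prop) hne2
    have e1 : ContinuousOn (fun x => Ff j v vr vt vrr x t ^ 2) (Ioc 0 R) := by
      unfold Ff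
      fun_prop
    have e2 : ContinuousOn (fun x => C1 * Ef j v vr x t) (Ioc 0 R) := by
      unfold Ef Pf
      fun_prop
    have hcl : r ∈ closure (Ioo 0 R) := by rw [closure_Ioo hR.ne]; exact hio hr
    exact ContinuousWithinAt.closure_le hcl ((e1 r hr).mono Ioo_subset_Ioc_self)
      ((e2 r hr).mono Ioo_subset_Ioc_self) (fun x hx => hf x hx t ht)

theorem Pk.mulR {R t1 t2 : ℝ} {v vr vt vrr vrt : ℝ → ℝ → ℝ} (k : Pk R t1 t2 v vr vt vrr vrt) :
    Pk R t1 t2 (fun r t => (R - r) * v r t) (fun r t => (R - r) * vr r t - v r t)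
      (fun r t => (R - r) * vt r t) (fun r t => (R - r) * vrr r t - 2 * vr r t)
      (fun r t => (R - r) * vrt r t - vt r t) := by
  have hl : ∀ r, HasDerivWithinAt (fun x : ℝ => R - x) (-1) (Icc 0 R) r := fun r =>
    ((hasDerivAt_id r).const_sub R).hasDerivWithinAt
  obtain ⟨dr, drr, dtr, dt, drt, cv, cvr, cvt, cvrr, cvrt⟩ := k
  refine ⟨fun r hr t ht => ?_, fun r hr t ht => ?_, fun r hr t ht => ?_, fun r hr t ht => ?_,
    fun r hr t ht => ?_, ?_, ?_, ?_, ?_, ?_⟩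
  · exact ((hl r).mul (dr r hr t ht)).congr_deriv (by ring)
  · exact (((hl r).mul (drr r hr t ht)).sub (dr r hr t ht)).congr_deriv (by ring)
  · exact ((hl r).mul (dtr r hr t ht)).congr_deriv (by ring)
  · exact (dt r hr t ht).const_mul _
  · exact ((drt r hr t ht).const_mul _).sub (dt r hr t ht)
  all_goals fun_prop

theorem kap_ge (j : ℕ) : 3 / 4 ≤ kap j := by
  unfold kap
  have : (0:ℝ) ≤ j := Nat.cast_nonneg j
  nlinarith

theorem lin_to_sq {j : ℕ} {A F r t : ℝ} {v vr : ℝ → ℝ → ℝ} (_hA : 0 ≤ A)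
    (h : |F| ≤ A * (|Pf j v vr r t| + |v r t / r|)) : F ^ 2 ≤ (3 * A ^ 2) * Ef j v vr r t := by
  unfold Ef
  have hk := kap_ge j
  set P := Pf j v vr r t
  set x := v r t / r
  have h1 : F ^ 2 ≤ (A * (|P| + |x|)) ^ 2 := by
    rw [← sq_abs F]; exact pow_le_pow_left₀ (abs_nonneg _) h 2
  have h2 : (|P| + |x|) ^ 2 ≤ 3 * (P ^ 2 + kap j * x ^ 2) := by
    rw [← sq_abs P, ← sq_abs x]
    nlinarith [sq_nonneg (|P| - |x|), sq_nonneg (|P|), mul_nonneg (sub_nonneg.2 hk) (sq_nonneg |x|),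
      sq_nonneg |x|, sq_nonneg (2*|P| - |x|)]
  calc F ^ 2 ≤ _ := h1
    _ = A ^ 2 * (|P| + |x|) ^ 2 := by ring
    _ ≤ A ^ 2 * (3 * (P ^ 2 + kap j * x ^ 2)) := by gcongr
    _ = _ := by ring

end ZN

namespace ZN

theorem tildeA {C R δ r x P F n : ℝ} (hδ : 0 < δ) (hr : r ∈ Ioo 0 R) (hs : δ ≤ R - r) (hn : 0 ≤ n)
    (hC0 : 0 ≤ C) (hF : |F| ≤ C * |x|) :
    |(R - r) * F + 2 * P + n * x| ≤ (C + 2 * ((1 + R / δ + n / 2) / δ) + n / δ) *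
      (|(R - r) * P - r * x + n / 2 * ((R - r) * x)| + |(R - r) * x|) := by
  have hR : 0 < R := hr.1.trans hr.2
  set s := R - r with hsdef
  have hs0 : 0 < s := hδ.trans_le hs
  set y := s * x with hy
  set Q := s * P - r * x + n / 2 * y with hQ
  have hC : 0 ≤ C * |x| := (abs_nonneg _).trans hF
  have y1 : δ * |x| ≤ |y| := by
    rw [hy, abs_mul, abs_of_pos hs0]; gcongr
  have x1 : |x| ≤ |y| / δ := by rw [le_div_iff₀ hδ]; linarith
  have f1 : |s * F| ≤ C * |y| := by
    rw [hy, abs_mul, abs_mul, abs_of_pos hs0]; nlinarith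
  have p1 : δ * |P| ≤ |Q| + R * |x| + n / 2 * |y| := by
    have e : s * P = Q + r * x - n / 2 * y := by rw [hQ]; ring
    calc δ * |P| ≤ s * |P| := by gcongr
      _ = |s * P| := by rw [abs_mul, abs_of_pos hs0]
      _ ≤ |Q| + |r * x| + |n / 2 * y| := by
        rw [e]; exact (abs_sub _ _).trans (add_le_add_left (abs_add_le _ _) _)
      _ ≤ |Q| + R * |x| + n / 2 * |y| := by
        rw [abs_mul, abs_mul, abs_of_pos hr.1, abs_of_nonneg (by positivity : 0 ≤ n / 2)]
        have := hr.2.le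
        gcongr
  have p2 : |P| ≤ (|Q| + R * (|y| / δ) + n / 2 * |y|) / δ := by
    rw [le_div_iff₀ hδ]
    have : R * |x| ≤ R * (|y| / δ) := by gcongr
    linarith
  have p3 : |P| ≤ ((1 + R / δ + n / 2) / δ) * (|Q| + |y|) := by
    refine p2.trans ?_
    rw [div_mul_eq_mul_div (1 + R / δ + n / 2) δ]
    refine div_le_div_of_nonneg_right ?_ hδ.le
    have a1 : 0 ≤ R / δ * |Q| := by positivity
    have a2 : 0 ≤ n / 2 * |Q| := by positivity
    have a3 : R * (|y| / δ) = R / δ * |y| := by ring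
    rw [a3]
    nlinarith [abs_nonneg y]
  have x2 : n * |x| ≤ n / δ * (|Q| + |y|) := by
    have : n * |x| ≤ n * (|y| / δ) := by gcongr
    have a3 : n * (|y| / δ) = n / δ * |y| := by ring
    have a1 : 0 ≤ n / δ * |Q| := by positivity
    linarith
  have hCy : C * |y| ≤ C * (|Q| + |y|) := by
    have := mul_nonneg hC0 (abs_nonneg Q); linarith
  calc |s * F + 2 * P + n * x| ≤ |s * F| + |2 * P| + |n * x| :=
        (abs_add_le _ _).trans (add_le_add_left (abs_add_le _ _) _)
    _ = |s * F| + 2 * |P| + n * |x| := by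
        rw [abs_mul 2 P, abs_mul n x, abs_of_nonneg hn, abs_of_pos (by norm_num : (0:ℝ) < 2)]
    _ ≤ _ := by nlinarith

theorem tildeB {C M R c r x P F n : ℝ} (hC : 0 ≤ C) (hM : 0 ≤ M) (hc : 0 < c) (hr : r ∈ Ioo 0 R)
    (hn : 1 ≤ n)
    (hF : |F| ≤ C * |x|) (hx : |x| ≤ M) (hP : |P| ≤ M) (hv : c / 2 ≤ |(R - r) * P - r * x|) :
    |(R - r) * F + 2 * P + n * x| ≤ ((R * (C * M) + 2 * M + n * M) * (2 * n / c)) *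
      (|(R - r) * P - r * x + n / 2 * ((R - r) * x)| + |(R - r) * x|) := by
  have hR : 0 < R := hr.1.trans hr.2
  have hs0 : 0 < R - r := by linarith [hr.2]
  have h1 : |(R - r) * F + 2 * P + n * x| ≤ R * (C * M) + 2 * M + n * M := by
    calc |(R - r) * F + 2 * P + n * x| ≤ |(R - r) * F| + |2 * P| + |n * x| :=
        (abs_add_le _ _).trans (add_le_add_left (abs_add_le _ _) _)
    _ = (R - r) * |F| + 2 * |P| + n * |x| := by
        rw [abs_mul 2 P, abs_mul n x, abs_of_nonneg (by linarith : 0 ≤ n),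
          abs_of_pos (by norm_num : (0:ℝ) < 2), abs_mul, abs_of_pos hs0]
    _ ≤ _ := by
      have : |F| ≤ C * M := hF.trans (by gcongr)
      have : R - r ≤ R := by linarith [hr.1]
      gcongr
  have h2 : c / 2 ≤ n * (|(R - r) * P - r * x + n / 2 * ((R - r) * x)| + |(R - r) * x|) := by
    set y := (R - r) * x
    set Q := (R - r) * P - r * x + n / 2 * y with hQ
    have e : (R - r) * P - r * x = Q - n / 2 * y := by rw [hQ]; ring
    rw [e] at hv
    have := hv.trans (abs_sub _ _)
    rw [abs_mul, abs_of_nonneg (by positivity : 0 ≤ n / 2)] at this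
    nlinarith [abs_nonneg Q, abs_nonneg y]
  set G := |(R - r) * P - r * x + n / 2 * ((R - r) * x)| + |(R - r) * x|
  have h3 : 1 ≤ (2 * n / c) * G := by
    rw [div_mul_eq_mul_div, le_div_iff₀ hc]; linarith
  have hn0 : 0 ≤ n := by linarith
  refine h1.trans ?_
  rw [mul_assoc]
  exact le_mul_of_one_le_right (by positivity) h3

theorem tilde_ineq {j : ℕ} {R t1 t2 a c C : ℝ} {v vr vt vrr vrt : ℝ → ℝ → ℝ}
    (k : Pk R t1 t2 v vr vt vrr vrt) (hR : 0 < R)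
    (ha : t1 < a) (hac : a ≤ c) (hc : c < t2) (h0 : ∀ t ∈ Ioo t1 t2, v 0 t = 0)
    (hvR : ∀ t ∈ Ioo t1 t2, v R t ≠ 0) (hC : 0 ≤ C)
    (hF : ∀ r ∈ Ioo 0 R, ∀ t ∈ Ioo a c, |Ff j v vr vt vrr r t| ≤ C * |v r t / r|) :
    ∃ C1, 0 ≤ C1 ∧ ∀ r ∈ Ioo 0 R, ∀ t ∈ Ioo a c,
      Ff j (fun r t => (R - r) * v r t) (fun r t => (R - r) * vr r t - v r t)
      (fun r t => (R - r) * vt r t) (fun r t => (R - r) * vrr r t - 2 * vr r t) r t ^ 2 ≤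
      C1 * Ef j (fun r t => (R - r) * v r t) (fun r t => (R - r) * vr r t - v r t) r t := by
  obtain ⟨M, hM, H⟩ := k.bound ha hc
  have hsub : Icc a c ⊆ Ioo t1 t2 := Icc_subset_Ioo ha hc
  have hRm : R ∈ Icc 0 R := ⟨hR.le, le_rfl⟩
  obtain ⟨τ, hτ, hmin⟩ := isCompact_Icc.exists_isMinOn (nonempty_Icc.2 hac)
    (f := fun t => |v R t|) (fun t ht => by
      exact (k.dt R hRm t (hsub ht)).continuousAt.continuousWithinAt.abs)
  set c1 := |v R τ| with hc1
  have hc1p : 0 < c1 := abs_pos.2 (hvR τ (hsub hτ))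
  have hmin' : ∀ t ∈ Icc a c, c1 ≤ |v R t| := fun t ht => hmin ht
  set δ := c1 / (4 * (M + 1)) with hδ
  have hδp : 0 < δ := by positivity
  have hδM : M * δ ≤ c1 / 4 := by
    rw [hδ, ← mul_div_assoc, div_le_div_iff₀ (by positivity) (by norm_num)]; nlinarith
  set n : ℝ := (j : ℝ) + 1 with hn
  have hn1 : 1 ≤ n := by rw [hn]; linarith [(Nat.cast_nonneg j : (0:ℝ) ≤ j)]
  have hn0 : 0 ≤ n := by linarith
  set A := C + 2 * ((1 + R / δ + n / 2) / δ) + n / δ with hA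
  set B := (R * (C * M) + 2 * M + n * M) * (2 * n / c1) with hB
  have hA0 : 0 ≤ A := by positivity
  have hB0 : 0 ≤ B := by positivity
  refine ⟨3 * (A + B) ^ 2, by positivity, fun r hr t ht => lin_to_sq (by positivity) ?_⟩
  have ht' := Ioo_subset_Icc_self ht
  have hr' := Ioo_subset_Icc_self hr
  have hr0 : r ≠ 0 := hr.1.ne'
  set x := v r t / r with hx
  have hvx : v r t = r * x := by rw [hx]; field_simp
  have eF : Ff j (fun r t => (R - r) * v r t) (fun r t => (R - r) * vr r t - v r t)
      (fun r t => (R - r) * vt r t) (fun r t => (R - r) * vrr r t - 2 * vr r t) r t =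
      (R - r) * Ff j v vr vt vrr r t + 2 * vr r t + n * x := by
    unfold Ff; rw [hn, hx]; field_simp; ring
  have eP : Pf j (fun r t => (R - r) * v r t) (fun r t => (R - r) * vr r t - v r t) r t =
      (R - r) * vr r t - r * x + n / 2 * ((R - r) * x) := by
    unfold Pf; rw [hn, hx]; field_simp
  have ex : (R - r) * v r t / r = (R - r) * x := by rw [hx]; ring
  rw [eF, eP]
  simp only [ex]
  set G := |(R - r) * vr r t - r * x + n / 2 * ((R - r) * x)| + |(R - r) * x| with hG
  have hG0 : 0 ≤ G := by positivity
  rcases le_or_gt δ (R - r) with hcase | hcase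
  · have := tildeA hδp hr hcase hn0 hC (P := vr r t) (hF r hr t ht)
    exact this.trans (mul_le_mul_of_nonneg_right (by linarith) hG0)
  · have b1 : |v r t| ≤ M * r := mvt0 (f := fun x => v x t) (fun x hx => k.dr x hx t (hsub ht'))
      (h0 t (hsub ht')) hr' (fun x hx => (H x ⟨hx.1, hx.2.trans hr.2.le⟩ t ht').2.1)
    have b2 : |x| ≤ M := by
      rw [hx, abs_div, abs_of_pos hr.1, div_le_iff₀ hr.1]; exact b1
    have b3 : |vr r t| ≤ M := (H r hr' t ht').2.1
    have b4 : |v R t - v r t| ≤ M * |R - r| :=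
      (convex_Icc 0 R).norm_image_sub_le_of_norm_hasDerivWithin_le
        (f := fun x => v x t) (fun x hx => k.dr x hx t (hsub ht'))
        (fun x hx => (H x hx t ht').2.1) hr' hRm
    have hs0 : 0 < R - r := by linarith [hr.2]
    rw [abs_of_pos hs0] at b4
    have b5 : M * (R - r) ≤ c1 / 4 := (mul_le_mul_of_nonneg_left hcase.le hM).trans hδM
    have b6 : |(R - r) * vr r t| ≤ c1 / 4 := by
      rw [abs_mul, abs_of_pos hs0]; nlinarith
    have b7 : c1 / 2 ≤ |(R - r) * vr r t - r * x| := by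
      rw [← hvx]
      have q1 := hmin' t ht'
      have q2 : |v R t| ≤ |v R t - v r t| + |v r t| := by
        simpa using abs_add_le (v R t - v r t) (v r t)
      have q3 : |v r t| ≤ |(R - r) * vr r t - v r t| + |(R - r) * vr r t| := by
        have := abs_sub ((R - r) * vr r t) ((R - r) * vr r t - v r t)
        simp only [sub_sub_cancel] at this
        linarith
      linarith
    have := tildeB hC hM hc1p hr hn1 (hF r hr t ht) b2 b3 b7
    exact this.trans (mul_le_mul_of_nonneg_right (by linarith) hG0)

end ZN

namespace ZN

theorem b_bound {R t1 t2 t B0 C : ℝ} {b : ℝ → ℝ → ℝ}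
    (hb : ContDiffOn ℝ (⊤ : ℕ∞) (fun p : ℝ × ℝ => b p.1 p.2) (Icc 0 R ×ˢ Ioo t1 t2))
    (ht : t ∈ Ioo t1 t2) (hC : ∀ r ∈ Icc (0:ℝ) R, |deriv (fun x => b x t) r| ≤ C)
    (hb0 : b 0 t = B0) : ∀ r ∈ Ioo 0 R, |b r t - B0| ≤ C * r := by
  intro r hr
  have hd : ∀ x ∈ Icc 0 R, HasDerivWithinAt (fun x => b x t) _ (Icc 0 R) x :=
    fun x hx => partial_r hb hx ht
  obtain ⟨ξ, hξ, he⟩ := exists_deriv_eq_slope (fun x => b x t) hr.1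
    (fun x hx => ((hd x ⟨hx.1, hx.2.trans hr.2.le⟩).continuousWithinAt).mono
      (Icc_subset_Icc_right hr.2.le))
    (fun x hx => (((hd x ⟨hx.1.le, (hx.2.trans hr.2).le⟩).hasDerivAt
      (Icc_mem_nhds hx.1 (hx.2.trans hr.2))).differentiableAt).differentiableWithinAt)
  have h1 := hC ξ ⟨hξ.1.le, (hξ.2.trans hr.2).le⟩
  rw [he, hb0, sub_zero, abs_div, abs_of_pos hr.1, div_le_iff₀ hr.1] at h1
  exact h1

theorem pde_Pk {m : ℕ} {R t1 t2 : ℝ} {b v vr vt vrr vrt : ℝ → ℝ → ℝ}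
    (k : Pk R t1 t2 v vr vt vrr vrt)
    (hpde : ∀ r ∈ Ioo (0:ℝ) R, ∀ t ∈ Ioo t1 t2,
      deriv (fun s => v r s) t =
        deriv (deriv (fun x => v x t)) r + (((m : ℝ) - 1) / r) * deriv (fun x => v x t) r
          - (b r t / r ^ 2) * v r t) :
    ∀ r ∈ Ioo (0:ℝ) R, ∀ t ∈ Ioo t1 t2,
      vt r t = vrr r t + (((m : ℝ) - 1) / r) * vr r t - (b r t / r ^ 2) * v r t := by
  intro r hr t ht
  have h := hpde r hr t ht
  have d1 : ∀ x ∈ Ioo 0 R, deriv (fun x => v x t) x = vr x t := fun x hx =>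
    ((k.dr x (Ioo_subset_Icc_self hx) t ht).hasDerivAt (Icc_mem_nhds hx.1 hx.2)).deriv
  have d2 : deriv (deriv (fun x => v x t)) r = vrr r t := by
    have : deriv (fun x => v x t) =ᶠ[nhds r] fun x => vr x t := by
      filter_upwards [Ioo_mem_nhds hr.1 hr.2] with x hx using d1 x hx
    rw [this.deriv_eq]
    exact ((k.drr r (Ioo_subset_Icc_self hr) t ht).hasDerivAt (Icc_mem_nhds hr.1 hr.2)).deriv
  rw [d1 r hr, d2, (k.dt r (Ioo_subset_Icc_self hr) t ht).deriv] at h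
  exact h

theorem v_zero {m : ℕ} (hm : 2 ≤ m) {R t1 t2 : ℝ} (hR : 0 < R) {b v vr vt vrr vrt : ℝ → ℝ → ℝ}
    (k : Pk R t1 t2 v vr vt vrr vrt)
    (hb : ContDiffOn ℝ (⊤ : ℕ∞) (fun p : ℝ × ℝ => b p.1 p.2) (Icc 0 R ×ˢ Ioo t1 t2))
    (hb0 : ∀ t ∈ Ioo t1 t2, b 0 t = (m : ℝ) - 1)
    (hpde : ∀ r ∈ Ioo (0:ℝ) R, ∀ t ∈ Ioo t1 t2,
      vt r t = vrr r t + (((m : ℝ) - 1) / r) * vr r t - (b r t / r ^ 2) * v r t) :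
    ∀ t ∈ Ioo t1 t2, v 0 t = 0 := by
  intro t ht
  have c1 := slice ht k.cv
  have c2 := slice ht k.cvr
  have c3 := slice ht k.cvt
  have c4 := slice ht k.cvrr
  have c5 := slice ht hb.continuousOn
  have e : EqOn (fun r => b r t * v r t)
      (fun r => r ^ 2 * (vrr r t - vt r t) + ((m : ℝ) - 1) * (r * vr r t)) (Ioo 0 R) := by
    intro r hr
    have := hpde r hr t ht
    have hr0 : r ≠ 0 := hr.1.ne'
    simp only
    rw [this]
    field_simp
    ring
  have e2 := e.of_subset_closure (c5.mul c1) (by fun_prop) Ioo_subset_Icc_self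
    (by rw [closure_Ioo hR.ne]) (⟨le_rfl, hR.le⟩ : (0:ℝ) ∈ Icc 0 R)
  simp only [hb0 t ht] at e2
  have hm' : (2:ℝ) ≤ m := by exact_mod_cast hm
  have e3 : ((m : ℝ) - 1) * v 0 t = 0 := by rw [e2]; ring
  rcases mul_eq_zero.1 e3 with h | h
  · linarith
  · exact h

theorem F_bound {j : ℕ} {R t1 t2 C : ℝ} {b v vr vt vrr : ℝ → ℝ → ℝ}
    (hpde : ∀ r ∈ Ioo (0:ℝ) R, ∀ t ∈ Ioo t1 t2,
      vt r t = vrr r t + ((((j + 2 : ℕ) : ℝ) - 1) / r) * vr r t - (b r t / r ^ 2) * v r t)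
    (hb : ∀ t ∈ Ioo t1 t2, ∀ r ∈ Ioo 0 R, |b r t - (((j + 2 : ℕ) : ℝ) - 1)| ≤ C * r) :
    ∀ r ∈ Ioo (0:ℝ) R, ∀ t ∈ Ioo t1 t2, |Ff j v vr vt vrr r t| ≤ C * |v r t / r| := by
  intro r hr t ht
  have hr0 : r ≠ 0 := hr.1.ne'
  have h1 : Ff j v vr vt vrr r t = -((b r t - (((j + 2 : ℕ) : ℝ) - 1)) / r) * (v r t / r) := by
    unfold Ff
    rw [hpde r hr t ht]
    push_cast
    field_simp
    ring
  rw [h1, abs_mul, abs_neg, abs_div, abs_of_pos hr.1]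
  gcongr
  rw [div_le_iff₀ hr.1]
  exact hb t ht r hr

end ZN

theorem zero_number_finite_before
    (m : ℕ) (hm : 2 ≤ m) (R t1 t2 : ℝ) (hR : 0 < R) (ht12 : t1 < t2)
    (b v : ℝ → ℝ → ℝ)
    (hb_smooth : ContDiffOn ℝ (⊤ : ℕ∞) (fun p : ℝ × ℝ => b p.1 p.2) (Icc 0 R ×ˢ Ioo t1 t2))
    (hb_bdd : ∃ C : ℝ, ∀ r ∈ Icc (0:ℝ) R, ∀ t ∈ Ioo t1 t2, |b r t| ≤ C)
    (hb_deriv_bdd : ∃ C : ℝ, ∀ r ∈ Icc (0:ℝ) R, ∀ t ∈ Ioo t1 t2,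
      |deriv (fun x => b x t) r| ≤ C ∧ |deriv (fun s => b r s) t| ≤ C)
    (hb0 : ∀ t ∈ Ioo t1 t2, b 0 t = (m : ℝ) - 1)
    (hbr0 : ∀ t ∈ Ioo t1 t2, deriv (fun x => b x t) 0 = 0)
    (hv_smooth : ContDiffOn ℝ (⊤ : ℕ∞) (fun p : ℝ × ℝ => v p.1 p.2) (Icc 0 R ×ˢ Ioo t1 t2))
    (hpde : ∀ r ∈ Ioo (0:ℝ) R, ∀ t ∈ Ioo t1 t2,
      deriv (fun s => v r s) t =
        deriv (deriv (fun x => v x t)) r + (((m : ℝ) - 1) / r) * deriv (fun x => v x t) r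
          - (b r t / r ^ 2) * v r t)
    (hbc0 : (∀ t ∈ Ioo t1 t2, v 0 t = 0) ∨ (∀ t ∈ Ioo t1 t2, v 0 t ≠ 0))
    (hbcR : (∀ t ∈ Ioo t1 t2, v R t = 0) ∨ (∀ t ∈ Ioo t1 t2, v R t ≠ 0))
    (hnz : ¬ ∀ r ∈ Icc (0:ℝ) R, ∀ t ∈ Ioo t1 t2, v r t = 0)
    :
    ∀ t0 ∈ Ioo t1 t2, ∃ ε0 : ℝ, 0 < ε0 ∧ t1 < t0 - ε0 ∧
      ∀ t ∈ Ioo (t0 - ε0) t0, {r ∈ Icc (0:ℝ) R | v r t = 0}.Finite := by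
  intro t0 ht0
  refine ⟨(t0 - t1) / 2, by linarith [ht0.1], by linarith [ht0.1], fun T hT' => ?_⟩
  have hT : T ∈ Ioo t1 t2 := ⟨by linarith [hT'.1, ht0.1], hT'.2.trans ht0.2⟩
  by_contra hinf
  obtain ⟨vr, vt, vrr, vrt, k⟩ := ZN.exists_Pk hR hv_smooth
  have hp := ZN.pde_Pk k hpde
  have h0 := ZN.v_zero hm hR k hb_smooth hb0 hp
  obtain ⟨C, hC⟩ := hb_deriv_bdd
  have hC0 : 0 ≤ C := (abs_nonneg _).trans (hC R ⟨hR.le, le_rfl⟩ T hT).1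
  have hbb : ∀ t ∈ Ioo t1 t2, ∀ r ∈ Ioo 0 R, |b r t - ((m : ℝ) - 1)| ≤ C * r := fun t ht =>
    ZN.b_bound hb_smooth ht (fun r hr => (hC r hr t ht).1) (hb0 t ht)
  obtain ⟨j, rfl⟩ : ∃ j, m = j + 2 := ⟨m - 2, by omega⟩
  have hF := ZN.F_bound hp hbb
  obtain ⟨ρ, hρ, hacc⟩ := Set.Infinite.exists_accPt_of_subset_isCompact
    (Set.not_finite.1 hinf : Set.Infinite _) isCompact_Icc (fun r hr => hr.1)
  have hsm : ContDiffOn ℝ (⊤ : ℕ∞) (fun r => v r T) (Icc 0 R) := by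
    have h3 : MapsTo (fun x : ℝ => (x, T)) (Icc 0 R) (Icc 0 R ×ˢ Ioo t1 t2) :=
      fun x hx => ⟨hx, hT⟩
    exact hv_smooth.comp (by fun_prop : ContDiffOn ℝ (⊤ : ℕ∞) (fun x : ℝ => (x, T)) (Icc 0 R)) h3
  have hflat : ∀ n : ℕ, ∃ B, 0 ≤ B ∧ ∀ r ∈ Icc 0 R, |v r T| ≤ B * |r - ρ| ^ n := fun n =>
    ZN.flat_aux hR n _ hsm ρ hρ hacc
  rcases hbcR with hvR | hvR
  · apply hnz
    intro r hr t ht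
    rcases eq_or_lt_of_le hr.1 with h | h
    · rw [← h]; exact h0 t ht
    have hr' : r ∈ Ioc 0 R := ⟨h, hr.2⟩
    obtain ⟨p, hp1, hp2⟩ := exists_between (lt_min ht.1 hT.1)
    have hpt : p < t := hp2.trans_le (min_le_left _ _)
    have hpT : p < T := hp2.trans_le (min_le_right _ _)
    obtain ⟨a, ha1, ha2⟩ := exists_between hp1
    obtain ⟨c, hc1, hc2⟩ := exists_between (max_lt ht.2 hT.2)
    have htc : t < c := (le_max_left _ _).trans_lt hc1
    have hTc : T < c := (le_max_right _ _).trans_lt hc1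
    obtain ⟨M, d⟩ := k.toDat (j := j) (a := a) (c := c) (C1 := 3 * C ^ 2) hR ha1 hc2 h0 hvR
      (by positivity) (fun r hr t ht => ZN.lin_to_sq hC0 (by
        have := hF r hr t ⟨ha1.trans ht.1, ht.2.trans hc2⟩
        have h2 := mul_nonneg hC0 (abs_nonneg (ZN.Pf j v vr r t))
        linarith))
    have hz := d.unique hρ ha2 hpT hTc (fun n => by
      obtain ⟨B, _, hB⟩ := hflat n
      exact ⟨B, fun r hr => hB r (Ioc_subset_Icc_self hr)⟩)
    exact d.forward_unique ⟨ha2, hpT.trans hTc⟩ ⟨ha2.trans hpt, htc⟩ hpt.le hz r hr'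
  · obtain ⟨p, hp1, hpT⟩ := exists_between hT.1
    obtain ⟨a, ha1, ha2⟩ := exists_between hp1
    obtain ⟨c, hTc, hc2⟩ := exists_between hT.2
    obtain ⟨C1, hC1, hC1'⟩ := ZN.tilde_ineq k hR ha1 (ha2.trans (hpT.trans hTc)).le hc2 h0 hvR hC0
      (fun r hr t ht => hF r hr t ⟨ha1.trans ht.1, ht.2.trans hc2⟩)
    obtain ⟨M, d⟩ := k.mulR.toDat hR ha1 hc2 (fun t ht => by simp [h0 t ht])
      (fun t ht => by simp) hC1 hC1'
    have hz := d.unique hρ ha2 hpT hTc (fun n => by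
      obtain ⟨B, hB0, hB⟩ := hflat n
      refine ⟨R * B, fun r hr => ?_⟩
      have h1 := hB r (Ioc_subset_Icc_self hr)
      rw [abs_mul, abs_of_nonneg (by linarith [hr.2] : 0 ≤ R - r), mul_assoc]
      have : R - r ≤ R := by linarith [hr.1]
      gcongr)
    have hpm : p ∈ Ioo t1 t2 := ⟨hp1, hpT.trans hT.2⟩
    have e : EqOn (fun r => v r p) (fun _ => 0) (Ioo 0 R) := by
      intro r hr
      have := hz r (Ioo_subset_Ioc_self hr)
      simp only [mul_eq_zero] at this
      rcases this with h | h
      · linarith [hr.2]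
      · exact h
    have e2 := e.of_subset_closure (ZN.slice hpm k.cv) continuousOn_const Ioo_subset_Icc_self
      (by rw [closure_Ioo hR.ne]) (⟨hR.le, le_rfl⟩ : R ∈ Icc 0 R)
    exact hvR p hpm e2
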